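/- Let n ≥ 2, 0 < α < 1 and k ≥ 1 be an integer. There exist constants C₀ > 0 depending only on n and k, η ∈ (0,1) depending only on n, k and α, and δ > 0 depending only on n, k and α, such that the following holds. Let Ω ⊂ ℝⁿ be a bounded domain with 0 ∈ ∂Ω, let P be a homogeneous polynomial of degree k−1 with ‖P‖ ≤ 1, and let u ∈ C^{k,α}(0) solve Δu + P = f in Ω∩B₁ and u = g on ∂Ω∩B₁. Assume ‖u‖_{L^∞(Ω∩B₁)} ≤ 1, u(0) = |Du(0)| = ⋯ = |D^k u(0)| = 0, |f(x)| ≤ δ|x|^{k−2+α} for all x ∈ Ω∩B₁, |g(x)| ≤ δ|x|^{k+α} for all x ∈ ∂Ω∩B₁, and ‖∂Ω∩B₁‖_{C^{1,α}(0)} ≤ δ. Then there exists a (k+1)-form Q (a homogeneous polynomial of degree k+1 with Q(x′,0) ≡ 0) such that ‖u − Q‖_{L^∞(Ω∩B_η)} ≤ η^{k+1+α}, ‖Q‖ ≤ C₀, and ΔQ + P ≡ 0. -/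

import Mathlib

open MvPolynomial Metric Set MeasureTheory Bornology

noncomputable section

/-- `ℝⁿ` with the Euclidean norm. -/
abbrev En (n : ℕ) := EuclideanSpace ℝ (Fin n)

variable {n : ℕ}

/-- Evaluation of a multivariate polynomial at a point of `ℝⁿ`. -/
def peval (P : MvPolynomial (Fin n) ℝ) (x : En n) : ℝ :=
  MvPolynomial.eval (fun i => x i) P

/-- Total degree of a monomial (multi-index). -/
def mdeg (d : Fin n →₀ ℕ) : ℕ := d.sum fun _ e => e

/-- `σ!` for a multi-index `σ`. -/
def mfact (d : Fin n →₀ ℕ) : ℕ := d.prod fun _ e => Nat.factorial e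

/-- The norm `‖P‖ = Σ_σ |a_σ|` of a polynomial `P = Σ_σ (a_σ/σ!) x^σ`. -/
def pnorm (P : MvPolynomial (Fin n) ℝ) : ℝ :=
  ∑ d ∈ P.support, (mfact d : ℝ) * |MvPolynomial.coeff d P|

/-- `|D^i P(0)|`, the Euclidean norm of the `i`-th derivative of `P` at `0`. -/
def derivNorm (i : ℕ) (P : MvPolynomial (Fin n) ℝ) : ℝ :=
  Real.sqrt (∑ d ∈ P.support.filter (fun d => mdeg d = i),
    ((mfact d : ℝ) * MvPolynomial.coeff d P) ^ 2)

/-- Polynomial Laplacian. -/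
def plap (P : MvPolynomial (Fin n) ℝ) : MvPolynomial (Fin n) ℝ :=
  ∑ i, MvPolynomial.pderiv i (MvPolynomial.pderiv i P)

/-- The index of the last coordinate. -/
def lastIdx (n : ℕ) [NeZero n] : Fin n :=
  ⟨n - 1, Nat.sub_lt (Nat.pos_of_ne_zero (NeZero.ne n)) Nat.one_pos⟩

variable [NeZero n]

/-- The last coordinate `x_n`. -/
def xn (x : En n) : ℝ := x (lastIdx n)

/-- `|x′|`, the norm of the first `n-1` coordinates. -/
def xpn (x : En n) : ℝ :=
  Real.sqrt (∑ i ∈ Finset.univ.erase (lastIdx n), (x i) ^ 2)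

/-- Substitution of the polynomial `q` for the last variable `x_n`. -/
def substLast (q P : MvPolynomial (Fin n) ℝ) : MvPolynomial (Fin n) ℝ :=
  MvPolynomial.aeval (fun i => if i = lastIdx n then q else MvPolynomial.X i) P

/-- The pointwise Laplacian of `u` at `x` (sum of pure second derivatives). -/
def lapAt (u : En n → ℝ) (x : En n) : ℝ :=
  ∑ i, fderiv ℝ (fderiv ℝ u) x (EuclideanSpace.single i 1) (EuclideanSpace.single i 1)

/-- `u` is a (classical) solution of `Δu = f` in `Ω ∩ B₁`, `u = g` on `∂Ω ∩ B₁`. -/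
def SolvesDirichlet (Ω : Set (En n)) (u f g : En n → ℝ) : Prop :=
  ContinuousOn u (closure Ω ∩ ball 0 1) ∧
  (∀ x ∈ Ω ∩ ball (0 : En n) 1,
    DifferentiableAt ℝ u x ∧ DifferentiableAt ℝ (fderiv ℝ u) x ∧ lapAt u x = f x) ∧
  (∀ x ∈ frontier Ω ∩ ball (0 : En n) 1, u x = g x)

/-- `u` is a (classical) solution of the oblique derivative problem `Δu = f` in `Ω ∩ B₁`,
`β·Du = g` on `∂Ω ∩ B₁`, with `‖β‖_∞ ≤ 1` and `β·e_n ≥ a₀`; `Du` is the (continuous up to the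
boundary) gradient of `u`. -/
def SolvesOblique (Ω : Set (En n)) (u f g : En n → ℝ) (β Du : En n → En n) (a₀ : ℝ) : Prop :=
  ContinuousOn u (closure Ω ∩ ball 0 1) ∧
  ContinuousOn Du (closure Ω ∩ ball 0 1) ∧
  (∀ x ∈ Ω ∩ ball (0 : En n) 1,
    DifferentiableAt ℝ u x ∧ (∀ i, fderiv ℝ u x (EuclideanSpace.single i 1) = Du x i) ∧
    DifferentiableAt ℝ (fderiv ℝ u) x ∧ lapAt u x = f x) ∧
  (∀ x ∈ frontier Ω ∩ ball (0 : En n) 1,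
    (∑ i, β x i * Du x i) = g x ∧ ‖β x‖ ≤ 1 ∧ a₀ ≤ β x (lastIdx n))

/-- `∂Ω ∈ C^{m,α}(0)` with polynomial `P_Ω = P` and constant `K`. -/
def DomainCmα (m : ℕ) (α K : ℝ) (P : MvPolynomial (Fin n) ℝ) (Ω : Set (En n)) : Prop :=
  P.totalDegree ≤ m ∧ MvPolynomial.coeff 0 P = 0 ∧
  MvPolynomial.pderiv (lastIdx n) P = 0 ∧
  (1 ≤ m → ∀ i, MvPolynomial.coeff (Finsupp.single i 1) P = 0) ∧
  (∀ x : En n, ‖x‖ < 1 → xn x > peval P x + K * (xpn x) ^ ((m : ℝ) + α) → x ∈ Ω) ∧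
  (∀ x : En n, ‖x‖ < 1 → xn x < peval P x - K * (xpn x) ^ ((m : ℝ) + α) → x ∉ Ω)

/-- `∂Ω ∈ C^{1,α}(0)` with constant `K` (the degree-one polynomial is necessarily `0`). -/
def Domain1α (α K : ℝ) (Ω : Set (En n)) : Prop :=
  (∀ x : En n, ‖x‖ < 1 → xn x > K * (xpn x) ^ ((1 : ℝ) + α) → x ∈ Ω) ∧
  (∀ x : En n, ‖x‖ < 1 → xn x < -(K * (xpn x) ^ ((1 : ℝ) + α)) → x ∉ Ω)

/-- `[∂Ω∩B₁]_{C^{0,1}(0)} ≤ δ`. -/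
def DomainLip (δ : ℝ) (Ω : Set (En n)) : Prop :=
  (∀ x : En n, ‖x‖ < 1 → xn x > δ * xpn x → x ∈ Ω) ∧
  (∀ x : En n, ‖x‖ < 1 → xn x < -(δ * xpn x) → x ∉ Ω)

/-- `osc_{B₁} ∂Ω ≤ δ`. -/
def FrontierOscLe (Ω : Set (En n)) (δ : ℝ) : Prop :=
  ∀ x ∈ frontier Ω ∩ ball (0 : En n) 1, ∀ y ∈ frontier Ω ∩ ball (0 : En n) 1,
    xn x - xn y ≤ δ

/-- The `L^n` norm of `f` on a set `S ⊆ ℝⁿ`. -/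
def LnNorm (n : ℕ) (S : Set (En n)) (f : En n → ℝ) : ℝ :=
  (∫ x in S, |f x| ^ (n : ℝ)) ^ ((n : ℝ)⁻¹)

/-- `∂Ω` is `C^{m,α}` at the point `x₀` with constants `K, r₀`: after an isometric change of
coordinates `φ` taking `x₀` to `0`, the boundary is trapped between `P_Ω(x′) ± K|x′|^{m+α}`. -/
def BoundaryPtCmα (m : ℕ) (α K r₀ : ℝ) (Ω : Set (En n)) (x₀ : En n) : Prop :=
  ∃ (φ : En n ≃ᵢ En n) (P : MvPolynomial (Fin n) ℝ), φ x₀ = 0 ∧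
    P.totalDegree ≤ m ∧ MvPolynomial.coeff 0 P = 0 ∧
    MvPolynomial.pderiv (lastIdx n) P = 0 ∧
    (1 ≤ m → ∀ i, MvPolynomial.coeff (Finsupp.single i 1) P = 0) ∧
    (∀ y : En n, ‖y‖ < r₀ → xn y > peval P y + K * (xpn y) ^ ((m : ℝ) + α) → φ.symm y ∈ Ω) ∧
    (∀ y : En n, ‖y‖ < r₀ → xn y < peval P y - K * (xpn y) ^ ((m : ℝ) + α) → φ.symm y ∉ Ω)

/-- `∂Ω ∩ B₁ ∈ C^{m,α}`: pointwise `C^{m,α}` with constants uniform on compact subsets. -/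
def BoundaryCmα (m : ℕ) (α : ℝ) (Ω : Set (En n)) : Prop :=
  ∀ S : Set (En n), IsCompact S → S ⊆ frontier Ω ∩ ball (0 : En n) 1 →
    ∃ K r₀ : ℝ, 0 ≤ K ∧ 0 < r₀ ∧ ∀ x₀ ∈ S, BoundaryPtCmα m α K r₀ Ω x₀

/-- `∂Ω ∩ B₁ ∈ C^∞`. -/
def BoundarySmooth (Ω : Set (En n)) : Prop :=
  ∀ m : ℕ, 1 ≤ m → ∀ α : ℝ, 0 < α → α ≤ 1 → BoundaryCmα m α Ω

/-- `u ∈ C^∞(Ω̄ ∩ B₁)`: near every point of `Ω̄ ∩ B₁`, `u` agrees on `Ω` with a globally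
smooth function. -/
def SmoothUpToBoundary (Ω : Set (En n)) (u : En n → ℝ) : Prop :=
  ∀ x₀ ∈ closure Ω ∩ ball (0 : En n) 1, ∃ ε : ℝ, 0 < ε ∧ ∃ v : En n → ℝ,
    ContDiff ℝ (⊤ : ℕ∞) v ∧ ∀ x ∈ Ω ∩ ball x₀ ε, v x = u x

section Helpers

set_option linter.unusedVariables false
set_option linter.unusedSimpArgs false
set_option linter.unusedSectionVars false

open Filter Topology


/-- second derivative at 0 -/
def D2 (g : ℝ → ℝ) (c : ℝ) : Prop :=
  ∃ g' : ℝ → ℝ, (∀ᶠ t in 𝓝 (0:ℝ), HasDerivAt g (g' t) t) ∧ HasDerivAt g' c 0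

theorem D2.add {g h : ℝ → ℝ} {c d : ℝ} (hg : D2 g c) (hh : D2 h d) :
    D2 (fun t => g t + h t) (c + d) := by
  obtain ⟨g', h1, h2⟩ := hg
  obtain ⟨h', h3, h4⟩ := hh
  refine ⟨fun t => g' t + h' t, ?_, h2.add h4⟩
  filter_upwards [h1, h3] with t a b using a.add b

theorem D2.const_mul {g : ℝ → ℝ} {c : ℝ} (a : ℝ) (hg : D2 g c) :
    D2 (fun t => a * g t) (a * c) := by
  obtain ⟨g', h1, h2⟩ := hg
  refine ⟨fun t => a * g' t, ?_, h2.const_mul a⟩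
  filter_upwards [h1] with t b using b.const_mul a

theorem D2.scale {g : ℝ → ℝ} {c : ℝ} (R : ℝ) (hg : D2 g c) :
    D2 (fun t => g (R * t)) (R ^ 2 * c) := by
  obtain ⟨g', h1, h2⟩ := hg
  have hl : ∀ t : ℝ, HasDerivAt (fun t : ℝ => R * t) R t := fun t => by
    simpa using (hasDerivAt_id t).const_mul R
  refine ⟨fun t => g' (R * t) * R, ?_, ?_⟩
  · have : Tendsto (fun t : ℝ => R * t) (𝓝 0) (𝓝 0) := by
      have := (hl 0).continuousAt.tendsto
      simpa using this
    filter_upwards [this.eventually h1] with t ht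
    exact ht.comp t (hl t)
  · have h2' : HasDerivAt g' c (R * 0) := by simpa using h2
    have := (h2'.comp (0:ℝ) (hl 0)).mul_const R
    exact this.congr_deriv (by ring)

theorem D2.nonpos {g : ℝ → ℝ} {c : ℝ} (hg : D2 g c) (hm : IsLocalMax g 0) : c ≤ 0 := by
  obtain ⟨g', h1, h2⟩ := hg
  by_contra hc
  push Not at hc
  have e : deriv g =ᶠ[𝓝 0] g' := by
    filter_upwards [h1] with t ht using ht.deriv
  have hdd : deriv (deriv g) 0 = c := by rw [e.deriv_eq, h2.deriv]
  have hd0 : deriv g 0 = 0 := hm.deriv_eq_zero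
  have hmin := isLocalMin_of_deriv_deriv_pos (by rw [hdd]; exact hc) hd0
    (h1.self_of_nhds.continuousAt)
  have : g =ᶠ[𝓝 0] fun _ => g 0 := by
    filter_upwards [hm, hmin] with t a b using le_antisymm a b
  have h3 : deriv g =ᶠ[𝓝 0] deriv (fun _ => g 0) := this.deriv
  have : deriv (deriv g) 0 = 0 := by
    rw [h3.deriv_eq]; simp
  linarith

/-- unit vector -/
def ee (i : Fin n) : En n := EuclideanSpace.single i 1

/-- Laplacian via second derivatives along coordinate lines -/
def Lap2 (u : En n → ℝ) (x : En n) (L : ℝ) : Prop :=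
  ∃ c : Fin n → ℝ, ∑ i, c i = L ∧ ∀ i, D2 (fun t : ℝ => u (x + t • ee i)) (c i)

theorem Lap2.add {u v : En n → ℝ} {x : En n} {L M : ℝ} (hu : Lap2 u x L) (hv : Lap2 v x M) :
    Lap2 (fun y => u y + v y) x (L + M) := by
  obtain ⟨c, rfl, h1⟩ := hu
  obtain ⟨d, rfl, h2⟩ := hv
  exact ⟨fun i => c i + d i, Finset.sum_add_distrib, fun i => (h1 i).add (h2 i)⟩

theorem Lap2.const_mul {u : En n → ℝ} {x : En n} {L : ℝ} (a : ℝ) (hu : Lap2 u x L) :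
    Lap2 (fun y => a * u y) x (a * L) := by
  obtain ⟨c, rfl, h1⟩ := hu
  exact ⟨fun i => a * c i, by rw [Finset.mul_sum], fun i => (h1 i).const_mul a⟩

theorem Lap2.neg {u : En n → ℝ} {x : En n} {L : ℝ} (hu : Lap2 u x L) :
    Lap2 (fun y => - u y) x (-L) := by
  simpa using hu.const_mul (-1)

theorem Lap2.sub {u v : En n → ℝ} {x : En n} {L M : ℝ} (hu : Lap2 u x L) (hv : Lap2 v x M) :
    Lap2 (fun y => u y - v y) x (L - M) := by
  simpa [sub_eq_add_neg] using hu.add hv.neg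

theorem Lap2.scale {u : En n → ℝ} {x : En n} {L : ℝ} (R : ℝ) (hu : Lap2 u (R • x) L) :
    Lap2 (fun y => u (R • y)) x (R ^ 2 * L) := by
  obtain ⟨c, rfl, h1⟩ := hu
  refine ⟨fun i => R ^ 2 * c i, by rw [Finset.mul_sum], fun i => ?_⟩
  have := (h1 i).scale R
  simpa [smul_add, smul_smul] using this

theorem hasDerivAt_line (x v : En n) (t : ℝ) : HasDerivAt (fun t : ℝ => x + t • v) v t := by
  simpa using ((hasDerivAt_id t).smul_const v).const_add x

theorem lap2_of_lapAt {Ω : Set (En n)} (ho : IsOpen Ω) {u : En n → ℝ} {x : En n} (hx : x ∈ Ω)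
    (hu : ∀ x ∈ Ω, DifferentiableAt ℝ u x) (h2 : DifferentiableAt ℝ (fderiv ℝ u) x) :
    Lap2 u x (lapAt u x) := by
  refine ⟨_, rfl, fun i => ⟨fun t => fderiv ℝ u (x + t • ee i) (ee i), ?_, ?_⟩⟩
  · have : ∀ᶠ t in 𝓝 (0:ℝ), x + t • ee i ∈ Ω := by
      have hc := (hasDerivAt_line x (ee i) 0).continuousAt
      apply hc.eventually_mem
      simpa using ho.mem_nhds hx
    filter_upwards [this] with t ht
    exact (hu _ ht).hasFDerivAt.comp_hasDerivAt t (hasDerivAt_line x (ee i) t)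
  · have h2' : HasFDerivAt (fderiv ℝ u) (fderiv ℝ (fderiv ℝ u) x) (x + (0:ℝ) • ee i) := by
      simpa using h2.hasFDerivAt
    have h3 := h2'.comp_hasDerivAt (0:ℝ) (hasDerivAt_line x (ee i) 0)
    exact ((ContinuousLinearMap.apply ℝ ℝ (ee i)).hasFDerivAt.comp_hasDerivAt (0:ℝ) h3)

/-! polynomials along lines -/

theorem peval_line (p : MvPolynomial (Fin n) ℝ) (x v : En n) (t : ℝ) :
    HasDerivAt (fun t : ℝ => peval p (x + t • v))
      (∑ i, v i * peval (pderiv i p) (x + t • v)) t := by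
  induction p using MvPolynomial.induction_on with
  | C a => simpa [peval] using hasDerivAt_const t a
  | add p q hp hq =>
    have := hp.add hq
    simp only [peval, map_add, mul_add, Finset.sum_add_distrib] at this ⊢
    exact this
  | mul_X p j hp =>
    have h1 : HasDerivAt (fun t : ℝ => (x + t • v) j) (v j) t := by
      simpa using ((hasDerivAt_id t).mul_const (v j)).const_add (x j)
    have := hp.mul h1
    simp only [peval, map_mul, eval_X, Derivation.leibniz, smul_eq_mul, map_add, pderiv_X,
      mul_add, Finset.sum_add_distrib] at this ⊢
    refine this.congr_deriv ?_
    rw [add_comm]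
    congr 1
    · symm; rw [Finset.sum_eq_single j]
      · simp; ring
      · intro b _ hb; simp [Pi.single_apply, hb.symm]
      · simp
    · rw [Finset.sum_mul]
      exact Finset.sum_congr rfl fun i _ => by ring

theorem peval_line_ee (p : MvPolynomial (Fin n) ℝ) (x : En n) (i : Fin n) (t : ℝ) :
    HasDerivAt (fun t : ℝ => peval p (x + t • ee i)) (peval (pderiv i p) (x + t • ee i)) t := by
  have := peval_line p x (ee i) t
  simpa [ee, PiLp.single_apply] using this

theorem lap2_peval (p : MvPolynomial (Fin n) ℝ) (x : En n) :
    Lap2 (peval p) x (peval (plap p) x) := by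
  refine ⟨fun i => peval (pderiv i (pderiv i p)) x, ?_, fun i => ⟨_,
    Eventually.of_forall fun t => peval_line_ee p x i t, ?_⟩⟩
  · simp [plap, peval]
  · simpa using peval_line_ee (pderiv i p) x i 0

theorem continuous_peval (p : MvPolynomial (Fin n) ℝ) : Continuous (peval p) := by
  unfold peval
  exact (MvPolynomial.continuous_eval p).comp (by fun_prop)

/-- |x|^2 -/
def rsq : MvPolynomial (Fin n) ℝ := ∑ i, X i ^ 2

theorem peval_rsq (x : En n) : peval rsq x = ‖x‖ ^ 2 := by
  simp [peval, rsq, EuclideanSpace.norm_sq_eq]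

theorem pderiv_rsq (i : Fin n) : pderiv i (rsq : MvPolynomial (Fin n) ℝ) = 2 * X i := by
  simp only [rsq, map_sum, Derivation.leibniz_pow, pderiv_X]
  rw [Finset.sum_eq_single i]
  · simp
  · intro b _ hb; simp [Pi.single_apply, hb.symm]
  · simp

theorem plap_rsq : plap (rsq : MvPolynomial (Fin n) ℝ) = C (2 * (n:ℝ)) := by
  have : ∀ i : Fin n, pderiv i (pderiv i (rsq : MvPolynomial (Fin n) ℝ)) = C 2 := by
    intro i
    rw [pderiv_rsq]
    have : (2 : MvPolynomial (Fin n) ℝ) = C 2 := (map_ofNat C 2).symm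
    rw [this, pderiv_C_mul, pderiv_X_self, mul_one]
  simp [plap, this]
  ring

theorem max_principle {V : Set (En n)} (hV : IsOpen V) (hb : IsBounded V) {w : En n → ℝ}
    (hc : ContinuousOn w (closure V)) (hL : ∀ x ∈ V, ∃ L, 0 ≤ L ∧ Lap2 w x L) {m : ℝ}
    (hm : ∀ x ∈ frontier V, w x ≤ m) : ∀ x ∈ V, w x ≤ m := by
  intro x hx
  have hK : IsCompact (closure V) := hb.isCompact_closure
  obtain ⟨R, hR⟩ := hb.closure.exists_norm_le
  have hR0 : 0 ≤ R := (norm_nonneg _).trans (hR x (subset_closure hx))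
  refine le_of_forall_pos_le_add fun e he => ?_
  set ε := e / (R ^ 2 + 1) with hε
  have hεp : 0 < ε := by positivity
  have hεR : ε * R ^ 2 ≤ e := by
    rw [hε, div_mul_eq_mul_div, div_le_iff₀ (by positivity)]; nlinarith
  obtain ⟨z, hz, hzmax⟩ := hK.exists_isMaxOn ⟨x, subset_closure hx⟩
    (hc.add ((continuous_peval rsq).continuousOn.const_smul ε) :
      ContinuousOn (fun y => w y + ε * peval rsq y) (closure V))
  have hxz : w x + ε * peval rsq x ≤ w z + ε * peval rsq z := hzmax (subset_closure hx)
  have hzV : z ∉ V := by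
    intro hzV
    obtain ⟨L, hL0, hL1⟩ := hL z hzV
    have h2 := hL1.add ((lap2_peval rsq z).const_mul ε)
    obtain ⟨c, hcs, hc2⟩ := h2
    have : ∀ i, c i ≤ 0 := by
      intro i
      apply (hc2 i).nonpos
      have hl := (hasDerivAt_line z (ee i) 0).continuousAt
      have : ∀ᶠ t in 𝓝 (0:ℝ), z + t • ee i ∈ V := by
        apply hl.eventually_mem
        simpa using hV.mem_nhds hzV
      filter_upwards [this] with t ht
      simpa using hzmax (subset_closure ht)
    have hs : ∑ i, c i ≤ 0 := Finset.sum_nonpos fun i _ => this i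
    rw [hcs, plap_rsq] at hs
    have hn : 0 < (n:ℝ) := by exact_mod_cast Nat.pos_of_ne_zero (NeZero.ne n)
    simp [peval] at hs
    have : 0 < ε * (2 * (n:ℝ)) := by positivity
    linarith
  have hzf : z ∈ frontier V := by
    rw [frontier, hV.interior_eq]; exact ⟨hz, hzV⟩
  have h1 := hm z hzf
  rw [peval_rsq, peval_rsq] at hxz
  have h3 : ε * ‖z‖ ^ 2 ≤ ε * R ^ 2 := by
    gcongr; exact hR z hz
  have h4 : 0 ≤ ε * ‖x‖ ^ 2 := by positivity
  linarith


theorem norm_line_sq (x : En n) (i : Fin n) (t : ℝ) :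
    ‖x + t • ee i‖ ^ 2 = ‖x‖ ^ 2 + 2 * x i * t + t ^ 2 := by
  rw [norm_add_sq_real]
  have : inner ℝ x (t • ee i) = t * x i := by
    rw [inner_smul_right]; simp [ee, EuclideanSpace.inner_single_right]
  rw [this, norm_smul]
  simp [ee]; ring

theorem d2_quad_rpow (a b p : ℝ) (ha : 0 < a) :
    D2 (fun t => (a + 2 * b * t + t ^ 2) ^ p)
      (p * (p - 1) * a ^ (p - 2) * (4 * b ^ 2) + 2 * p * a ^ (p - 1)) := by
  have hq : ∀ t : ℝ, HasDerivAt (fun t : ℝ => a + 2 * b * t + t ^ 2) (2 * b + 2 * t) t := by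
    intro t
    have h1 : HasDerivAt (fun t : ℝ => 2 * b * t) (2 * b) t := by
      simpa using (hasDerivAt_id t).const_mul (2 * b)
    have h2 : HasDerivAt (fun t : ℝ => t ^ 2) (2 * t) t := by
      simpa using hasDerivAt_pow 2 t
    exact (h1.const_add a).add h2
  refine ⟨fun t => (2 * b + 2 * t) * p * (a + 2 * b * t + t ^ 2) ^ (p - 1), ?_, ?_⟩
  · have : ∀ᶠ t in 𝓝 (0:ℝ), 0 < a + 2 * b * t + t ^ 2 := by
      apply (hq 0).continuousAt.eventually_const_lt
      simpa using ha
    filter_upwards [this] with t ht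
    exact (hq t).rpow_const (Or.inl ht.ne')
  · have h0 : a + 2 * b * 0 + (0:ℝ) ^ 2 ≠ 0 := by simpa using ha.ne'
    have h1 := (hq 0).rpow_const (p := p - 1) (Or.inl h0)
    have h2 : HasDerivAt (fun t : ℝ => (2 * b + 2 * t) * p) (2 * p) 0 := by
      have : HasDerivAt (fun t : ℝ => 2 * t) 2 (0:ℝ) := by
        simpa using (hasDerivAt_id (0:ℝ)).const_mul 2
      exact (this.const_add (2 * b)).mul_const p
    refine (h2.mul h1).congr_deriv ?_
    have e : p - 1 - 1 = p - 2 := by ring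
    simp [e]
    ring

/-- barrier -/
def bq (α : ℝ) (x : En n) : ℝ := (‖x‖ ^ 2) ^ ((1 + α) / 2)

theorem lap2_bq (hn : 2 ≤ n) {α : ℝ} (h0 : 0 < α) (h1 : α < 1) {x : En n} (hx : x ≠ 0) :
    ∃ L, ‖x‖ ^ (α - 1) ≤ L ∧ Lap2 (bq α) x L := by
  have ha : 0 < ‖x‖ ^ 2 := by positivity
  set a := ‖x‖ ^ 2 with had
  set p := (1 + α) / 2 with hp
  refine ⟨_, ?_, fun i => p * (p - 1) * a ^ (p - 2) * (4 * (x i) ^ 2) + 2 * p * a ^ (p - 1),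
    rfl, fun i => ?_⟩
  · rw [Finset.sum_add_distrib, ← Finset.mul_sum, ← Finset.mul_sum]
    have hs : ∑ i, (x i) ^ 2 = a := by
      rw [had, EuclideanSpace.norm_sq_eq]; simp
    rw [hs]
    have e1 : a ^ (p - 2) * a = a ^ (p - 1) := by
      rw [← Real.rpow_add_one ha.ne']; congr 1; ring
    have e2 : a ^ (p - 1) = ‖x‖ ^ (α - 1) := by
      rw [had, ← Real.rpow_natCast, ← Real.rpow_mul (norm_nonneg _)]
      congr 1; rw [hp]; push_cast; ring
    have e3 : p * (p - 1) * a ^ (p - 2) * (4 * a) = 4 * p * (p - 1) * ‖x‖ ^ (α - 1) := by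
      rw [← e2, ← e1]; ring
    rw [e3, e2]
    simp only [Finset.sum_const, Finset.card_univ, Fintype.card_fin, nsmul_eq_mul]
    have hnn : (2:ℝ) ≤ n := by exact_mod_cast hn
    have hz : 0 < ‖x‖ ^ (α - 1) := by positivity
    have : 4 * p * (p - 1) * ‖x‖ ^ (α - 1) + n * (2 * p * ‖x‖ ^ (α - 1))
        = ((1 + α) * (n + α - 1)) * ‖x‖ ^ (α - 1) := by
      rw [hp]; ring
    rw [this]
    have : 1 ≤ (1 + α) * (n + α - 1) := by nlinarith
    nlinarith
  · have := d2_quad_rpow a (x i) p ha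
    simpa [bq, norm_line_sq] using this

theorem continuous_bq {α : ℝ} (h0 : 0 < α) : Continuous (bq α : En n → ℝ) := by
  unfold bq
  apply Continuous.rpow_const (by fun_prop)
  intro x; right; positivity

theorem max_principle2 (hn : 2 ≤ n) {α : ℝ} (h0 : 0 < α) (h1 : α < 1)
    {V : Set (En n)} (hV : IsOpen V) (hb : V ⊆ ball 0 1) (hz : (0 : En n) ∉ V) {w : En n → ℝ}
    (hc : ContinuousOn w (closure V)) {δ : ℝ} (hδ : 0 ≤ δ)
    (hL : ∀ x ∈ V, ∃ L, - (δ * ‖x‖ ^ (α - 1)) ≤ L ∧ Lap2 w x L) {m : ℝ}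
    (hm : ∀ x ∈ frontier V, w x ≤ m) : ∀ x ∈ V, w x ≤ m + δ := by
  intro x hx
  have hbq : ∀ y ∈ closure V, bq α y ≤ 1 := by
    intro y hy
    have : ‖y‖ ≤ 1 := by
      have := closure_ball_subset_closedBall (closure_mono hb hy)
      simpa using this
    unfold bq
    apply Real.rpow_le_one (by positivity) _ (by positivity)
    nlinarith [norm_nonneg y]
  have hbq0 : 0 ≤ bq α x := by unfold bq; positivity
  have := max_principle hV (isBounded_ball.subset hb) (w := fun y => w y + δ * bq α y)
    (hc.add ((continuous_bq h0).continuousOn.const_smul δ)) (fun y hy => by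
      have hy0 : y ≠ 0 := fun h => hz (h ▸ hy)
      obtain ⟨L, hL1, hL2⟩ := hL y hy
      obtain ⟨M, hM1, hM2⟩ := lap2_bq hn h0 h1 hy0
      refine ⟨_, ?_, hL2.add (hM2.const_mul δ)⟩
      nlinarith [mul_le_mul_of_nonneg_left hM1 hδ]) (m := m + δ) (fun y hy => by
      have := hm y hy
      have h2 := hbq y (frontier_subset_closure hy)
      nlinarith) x hx
  have h3 : 0 ≤ δ * bq α x := mul_nonneg hδ hbq0
  linarith

/-- max principle for polynomials on balls -/
theorem max_principle_poly {r : ℝ} (p : MvPolynomial (Fin n) ℝ)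
    (hp : ∀ x : En n, ‖x‖ < r → 0 ≤ peval (plap p) x) {m : ℝ}
    (hm : ∀ x : En n, ‖x‖ = r → peval p x ≤ m) : ∀ x : En n, ‖x‖ ≤ r → peval p x ≤ m := by
  intro x hx
  rcases hx.lt_or_eq with h | h
  swap
  · exact hm x h
  refine max_principle (V := ball 0 r) isOpen_ball isBounded_ball
    (continuous_peval p).continuousOn (fun y hy => ⟨_, hp y (by simpa using hy), lap2_peval p y⟩)
    (fun y hy => hm y ?_) x (by simpa using h)
  have := frontier_ball_subset_sphere hy
  simpa using this

theorem plap_add (p q : MvPolynomial (Fin n) ℝ) : plap (p + q) = plap p + plap q := by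
  simp [plap, Finset.sum_add_distrib]

theorem plap_C_mul (a : ℝ) (q : MvPolynomial (Fin n) ℝ) : plap (C a * q) = C a * plap q := by
  simp only [plap, pderiv_C_mul, Finset.mul_sum]

theorem plap_sub (p q : MvPolynomial (Fin n) ℝ) : plap (p - q) = plap p - plap q := by
  simp [plap, Finset.sum_sub_distrib]

theorem plap_sum {ι : Type*} (s : Finset ι) (p : ι → MvPolynomial (Fin n) ℝ) :
    plap (∑ j ∈ s, p j) = ∑ j ∈ s, plap (p j) := by
  simp only [plap, map_sum]
  exact Finset.sum_comm

theorem plap_mul (p q : MvPolynomial (Fin n) ℝ) :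
    plap (p * q) = plap p * q + 2 * (∑ i, pderiv i p * pderiv i q) + p * plap q := by
  simp only [plap, pderiv_mul, map_add, Finset.mul_sum, Finset.sum_mul,
    ← Finset.sum_add_distrib]
  exact Finset.sum_congr rfl fun i _ => by ring

theorem pderiv_comm (i j : Fin n) (p : MvPolynomial (Fin n) ℝ) :
    pderiv i (pderiv j p) = pderiv j (pderiv i p) := by
  ext d
  simp only [coeff_pderiv]
  rw [add_right_comm]
  rcases eq_or_ne i j with rfl | h
  · rfl
  · simp [Finsupp.single_apply, h, h.symm]; ring

theorem plap_pderiv (j : Fin n) (p : MvPolynomial (Fin n) ℝ) :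
    plap (pderiv j p) = pderiv j (plap p) := by
  simp only [plap, map_sum]
  refine Finset.sum_congr rfl fun i _ => ?_
  rw [pderiv_comm i j p, pderiv_comm i j]

/-- Bernstein gradient estimate -/
theorem bernstein_grad {r M : ℝ} (hr : 0 < r) (hM : 0 ≤ M) (h : MvPolynomial (Fin n) ℝ)
    (hh : plap h = 0) (hb : ∀ x : En n, ‖x‖ ≤ r → |peval h x| ≤ M) (j : Fin n) :
    ∀ x : En n, ‖x‖ ≤ r / 2 → |peval (pderiv j h) x| ≤ (2 * n + 16) * M / r := by
  set v := pderiv j h with hv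
  have hvl : plap v = 0 := by rw [hv, plap_pderiv, hh, map_zero]
  set ψ : MvPolynomial (Fin n) ℝ := C (r ^ 2) - rsq with hψ
  set lam : ℝ := (2 * n + 16) * r ^ 2 with hlam
  have hdψ : ∀ i, pderiv i ψ = - (2 * X i) := fun i => by
    rw [hψ, map_sub, pderiv_rsq]; simp
  have hlψ : plap ψ = - C (2 * (n:ℝ)) := by
    rw [hψ, plap_sub, plap_rsq]; simp [plap]
  have hψx : ∀ x : En n, peval ψ x = r ^ 2 - ‖x‖ ^ 2 := fun x => by
    rw [← peval_rsq]; simp [hψ, peval]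
  set W := (ψ * v) * (ψ * v) + C lam * (h * h) with hW
  have key : ∀ x : En n, ‖x‖ ≤ r → peval W x ≤ lam * M ^ 2 := by
    apply max_principle_poly
    · intro x hx
      have e1 : plap (ψ * v) = - C (2 * (n:ℝ)) * v - 4 * ∑ i, X i * pderiv i v := by
        rw [plap_mul, hvl, hlψ]
        simp only [hdψ, Finset.mul_sum]
        rw [mul_zero, add_zero, sub_eq_add_neg, ← Finset.sum_neg_distrib]
        congr 1
        exact Finset.sum_congr rfl fun i _ => by ring
      have e2 : ∀ i, pderiv i (ψ * v) = - (2 * X i) * v + ψ * pderiv i v := fun i => by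
        rw [pderiv_mul, hdψ]
      have e3 : plap W = 2 * ((ψ * v) * plap (ψ * v))
          + 2 * (∑ i, (- (2 * X i) * v + ψ * pderiv i v) * (- (2 * X i) * v + ψ * pderiv i v))
          + C lam * (2 * (∑ i, pderiv i h * pderiv i h)) := by
        rw [hW, plap_add, plap_C_mul, plap_mul (ψ * v), plap_mul h, hh]
        simp only [e2]; ring
      rw [e3, e1]
      set V := peval v x with hV
      set s := peval ψ x with hs
      have hs0 : 0 ≤ s := by rw [hs, hψx]; nlinarith [norm_nonneg x]
      have hsr : s ≤ r ^ 2 := by rw [hs, hψx]; nlinarith [norm_nonneg x]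
      have e4 : ∀ q : MvPolynomial (Fin n) ℝ, MvPolynomial.eval (fun i => x i) q = peval q x :=
        fun _ => rfl
      have goal_eq : peval (2 * (ψ * v * (-C (2 * (n:ℝ)) * v - 4 * ∑ i, X i * pderiv i v))
          + 2 * (∑ i, (- (2 * X i) * v + ψ * pderiv i v) * (- (2 * X i) * v + ψ * pderiv i v))
          + C lam * (2 * (∑ i, pderiv i h * pderiv i h))) x
          = 2 * (s * V * (-(2 * n) * V - 4 * ∑ i, x i * peval (pderiv i v) x))
          + 2 * (∑ i, (- (2 * x i) * V + s * peval (pderiv i v) x) ^ 2)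
          + lam * (2 * (∑ i, (peval (pderiv i h) x) ^ 2)) := by
        simp only [peval, map_add, map_mul, map_sub, map_neg, map_sum, eval_X, eval_C, map_ofNat]
        simp only [e4, ← hV, ← hs, pow_two]
      rw [goal_eq]
      have hV2 : V ^ 2 ≤ ∑ i, (peval (pderiv i h) x) ^ 2 :=
        Finset.single_le_sum (f := fun i => (peval (pderiv i h) x) ^ 2)
          (fun i _ => sq_nonneg _) (Finset.mem_univ j)
      have hx2 : ∑ i, (x i) ^ 2 ≤ r ^ 2 := by
        have : ∑ i, (x i) ^ 2 = ‖x‖ ^ 2 := by rw [EuclideanSpace.norm_sq_eq]; simp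
        rw [this]; nlinarith [norm_nonneg x]
      have h5 : 2 * (∑ i, (- (2 * x i) * V + s * peval (pderiv i v) x) ^ 2)
          - 8 * (s * V * ∑ i, x i * peval (pderiv i v) x) ≥ - 32 * V ^ 2 * ∑ i, (x i) ^ 2 := by
        rw [Finset.mul_sum, Finset.mul_sum, Finset.mul_sum, Finset.mul_sum,
          ← Finset.sum_sub_distrib]
        apply Finset.sum_le_sum
        intro i _
        nlinarith [sq_nonneg (s * peval (pderiv i v) x - 4 * (x i * V))]
      have h6 : V ^ 2 * ∑ i, (x i) ^ 2 ≤ V ^ 2 * r ^ 2 :=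
        mul_le_mul_of_nonneg_left hx2 (sq_nonneg _)
      have h7 : lam * V ^ 2 ≤ lam * ∑ i, (peval (pderiv i h) x) ^ 2 :=
        mul_le_mul_of_nonneg_left hV2 (by positivity)
      have h8 : (n:ℝ) * (s * V ^ 2) ≤ n * (r ^ 2 * V ^ 2) := by gcongr
      have h9 : lam * V ^ 2 = 2 * (n * (r ^ 2 * V ^ 2)) + 16 * (V ^ 2 * r ^ 2) := by
        rw [hlam]; ring
      nlinarith
    · intro x hx
      have h1 : peval W x = (peval ψ x * peval v x) * (peval ψ x * peval v x)
          + lam * (peval h x * peval h x) := by simp [hW, peval]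
      rw [h1, hψx, hx]
      have := hb x hx.le
      have h2 : peval h x * peval h x ≤ M ^ 2 := by
        rw [← pow_two]; exact sq_le_sq' (by linarith [abs_le.1 this]) (abs_le.1 this).2
      have : 0 ≤ lam := by positivity
      simp only [sub_self, zero_mul, zero_add]
      gcongr
  intro x hx
  have h1 := key x (by linarith)
  have h2 : peval W x = (peval ψ x * peval v x) * (peval ψ x * peval v x)
      + lam * (peval h x * peval h x) := by simp [hW, peval]
  rw [h2] at h1
  have hs : r ^ 2 / 2 ≤ peval ψ x := by
    rw [hψx]; nlinarith [norm_nonneg x]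
  have h3 : 0 ≤ lam * (peval h x * peval h x) := by
    have : 0 ≤ lam := by positivity
    exact mul_nonneg this (mul_self_nonneg _)
  have h4 : (r ^ 2 / 2) ^ 2 * (peval v x) ^ 2 ≤ lam * M ^ 2 := by
    have : (r ^ 2 / 2) ^ 2 ≤ peval ψ x ^ 2 := by gcongr
    nlinarith [sq_nonneg (peval v x)]
  apply abs_le_of_sq_le_sq _ (by positivity)
  have h5 : (peval v x) ^ 2 ≤ 4 * (2 * n + 16) * M ^ 2 / r ^ 2 := by
    rw [le_div_iff₀ (by positivity)]
    have : r ^ 2 * (peval v x ^ 2 * r ^ 2) ≤ r ^ 2 * (4 * (2 * n + 16) * M ^ 2) := by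
      rw [hlam] at h4; nlinarith
    exact le_of_mul_le_mul_left this (by positivity)
  refine h5.trans ?_
  rw [div_pow, mul_pow]
  gcongr
  have : (0:ℝ) ≤ n := by positivity
  nlinarith


theorem mdeg_eq (d : Fin n →₀ ℕ) : mdeg d = ∑ i, d i := by
  unfold mdeg
  rw [Finsupp.sum_fintype]; simp

theorem degree_eq_mdeg (d : Fin n →₀ ℕ) : Finsupp.degree d = mdeg d := rfl

theorem mfact_eq (d : Fin n →₀ ℕ) : mfact d = ∏ i, (d i).factorial := by
  unfold mfact
  rw [Finsupp.prod_fintype]; simp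

theorem one_le_mfact (d : Fin n →₀ ℕ) : (1:ℝ) ≤ mfact d := by
  have : 1 ≤ mfact d := by
    rw [mfact_eq]; exact Finset.one_le_prod' fun i _ => Nat.factorial_pos _
  exact_mod_cast this

theorem mfact_add_single (d : Fin n →₀ ℕ) (i : Fin n) :
    mfact (d + Finsupp.single i 1) = (d i + 1) * mfact d := by
  classical
  rw [mfact_eq, mfact_eq, ← Finset.mul_prod_erase _ _ (Finset.mem_univ i),
    ← Finset.mul_prod_erase Finset.univ (fun j => (d j).factorial) (Finset.mem_univ i), ← mul_assoc]
  congr 1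
  · simp [Nat.factorial_succ]
  · refine Finset.prod_congr rfl fun j hj => ?_
    simp [Finsupp.single_apply, (Finset.ne_of_mem_erase hj).symm]

theorem mdeg_add_single (d : Fin n →₀ ℕ) (i : Fin n) :
    mdeg (d + Finsupp.single i 1) = mdeg d + 1 := by
  rw [mdeg_eq, mdeg_eq]
  simp [Finset.sum_add_distrib, Finsupp.single_apply]

theorem coeff_bound (m : ℕ) : ∃ C : ℝ, 0 ≤ C ∧ ∀ (r M : ℝ) (h : MvPolynomial (Fin n) ℝ),
    0 < r → 0 ≤ M → plap h = 0 → (∀ x : En n, ‖x‖ ≤ r → |peval h x| ≤ M) →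
    ∀ d, mdeg d = m → (mfact d : ℝ) * |coeff d h| ≤ C * M / r ^ m := by
  induction m with
  | zero =>
    refine ⟨1, zero_le_one, fun r M h hr hM hh hb d hd => ?_⟩
    have hd0 : d = 0 := by
      ext i
      rw [mdeg_eq, Finset.sum_eq_zero_iff] at hd
      simpa using hd i (Finset.mem_univ i)
    subst hd0
    have := hb 0 (by simpa using hr.le)
    have e : peval h (0 : En n) = coeff 0 h := by
      have : (fun i => (0 : En n) i) = (0 : Fin n → ℝ) := rfl
      rw [peval, this, MvPolynomial.eval_zero]; rfl
    rw [e] at this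
    simpa [mfact] using this
  | succ m ih =>
    obtain ⟨C, hC, ih⟩ := ih
    refine ⟨C * (2 * n + 16) * 2 ^ m, by positivity, fun r M h hr hM hh hb d hd => ?_⟩
    have : ∃ i, d i ≠ 0 := by
      by_contra hcon
      push Not at hcon
      rw [mdeg_eq] at hd
      simp [hcon] at hd
    obtain ⟨i, hi⟩ := this
    set d' := d - Finsupp.single i 1 with hd'
    have hdd : d = d' + Finsupp.single i 1 := by
      rw [hd', Finsupp.sub_add_single_one_cancel hi]
    rw [hdd, mdeg_add_single] at hd
    have hh' : plap (pderiv i h) = 0 := by rw [plap_pderiv, hh, map_zero]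
    have := ih (r / 2) ((2 * n + 16) * M / r) (pderiv i h) (by positivity) (by positivity) hh'
      (bernstein_grad hr hM h hh hb i) d' (by omega)
    rw [coeff_pderiv, ← hdd, abs_mul] at this
    rw [hdd, mfact_add_single, ← hdd]
    have e1 : |((d' i : ℝ) + 1)| = d' i + 1 := abs_of_nonneg (by positivity)
    rw [e1] at this
    push_cast
    calc ((d' i : ℝ) + 1) * mfact d' * |coeff d h| = mfact d' * (|coeff d h| * (d' i + 1)) := by ring
      _ ≤ _ := this
      _ = _ := by rw [div_pow, pow_succ]; field_simp

theorem pderiv_hc (i : Fin n) (j : ℕ) (h : MvPolynomial (Fin n) ℝ) :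
    pderiv i (homogeneousComponent (j + 1) h) = homogeneousComponent j (pderiv i h) := by
  ext d
  rw [coeff_pderiv, coeff_homogeneousComponent, coeff_homogeneousComponent, coeff_pderiv,
    degree_eq_mdeg, degree_eq_mdeg, mdeg_add_single]
  by_cases hd : mdeg d = j <;> simp [hd]

theorem pderiv_hc_zero (i : Fin n) (h : MvPolynomial (Fin n) ℝ) :
    pderiv i (homogeneousComponent 0 h) = 0 := by
  rw [homogeneousComponent_zero, pderiv_C]

theorem plap_hc (j : ℕ) (h : MvPolynomial (Fin n) ℝ) (hh : plap h = 0) :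
    plap (homogeneousComponent j h) = 0 := by
  rcases j with _ | _ | j
  · simp [plap, pderiv_hc_zero]
  · simp [plap, pderiv_hc, pderiv_hc_zero]
  · simp only [plap, pderiv_hc]
    rw [← map_sum]
    change homogeneousComponent j (plap h) = 0
    rw [hh, map_zero]

/-- Taylor truncation -/
def ptrunc (m : ℕ) (h : MvPolynomial (Fin n) ℝ) : MvPolynomial (Fin n) ℝ :=
  ∑ j ∈ Finset.range m, homogeneousComponent j h

theorem pderiv_ptrunc (i : Fin n) (m : ℕ) (h : MvPolynomial (Fin n) ℝ) :
    pderiv i (ptrunc (m + 1) h) = ptrunc m (pderiv i h) := by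
  rw [ptrunc, Finset.sum_range_succ', map_add, pderiv_hc_zero, map_sum, add_zero]
  simp only [pderiv_hc]; rfl

theorem ptrunc_zero_coeff (m : ℕ) (h : MvPolynomial (Fin n) ℝ) :
    peval (h - ptrunc (m + 1) h) (0 : En n) = 0 := by
  have e : ∀ q : MvPolynomial (Fin n) ℝ, peval q (0 : En n) = coeff 0 q := by
    intro q
    have : (fun i => (0 : En n) i) = (0 : Fin n → ℝ) := rfl
    rw [peval, this, MvPolynomial.eval_zero]; rfl
  rw [e, coeff_sub, ptrunc, Finset.sum_range_succ', coeff_add, coeff_sum]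
  simp [coeff_homogeneousComponent]

theorem taylor_bound (m : ℕ) : ∃ C : ℝ, 0 ≤ C ∧ ∀ (r M : ℝ) (h : MvPolynomial (Fin n) ℝ),
    0 < r → 0 ≤ M → plap h = 0 → (∀ x : En n, ‖x‖ ≤ r → |peval h x| ≤ M) →
    ∀ x : En n, ‖x‖ ≤ r / 2 ^ m → |peval (h - ptrunc m h) x| ≤ C * M / r ^ m * ‖x‖ ^ m := by
  induction m with
  | zero =>
    refine ⟨1, zero_le_one, fun r M h hr hM hh hb x hx => ?_⟩
    simpa [ptrunc] using hb x (by simpa using hx)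
  | succ m ih =>
    obtain ⟨C, hC, ih⟩ := ih
    refine ⟨n * (C * (2 * n + 16) * 2 ^ m), by positivity, fun r M h hr hM hh hb x hx => ?_⟩
    set R := h - ptrunc (m + 1) h with hR
    have hd : ∀ i, ∀ y : En n, ‖y‖ ≤ ‖x‖ → |peval (pderiv i R) y| ≤
        C * ((2 * n + 16) * M / r) / (r / 2) ^ m * ‖x‖ ^ m := by
      intro i y hy
      have hh' : plap (pderiv i h) = 0 := by rw [plap_pderiv, hh, map_zero]
      have := ih (r / 2) ((2 * n + 16) * M / r) (pderiv i h) (by positivity) (by positivity) hh'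
        (bernstein_grad hr hM h hh hb i) y (hy.trans (hx.trans (by rw [pow_succ']; field_simp; rfl)))
      rw [hR, map_sub, pderiv_ptrunc]
      refine this.trans ?_
      gcongr
    set B := C * ((2 * n + 16) * M / r) / (r / 2) ^ m * ‖x‖ ^ m with hB
    have hB0 : 0 ≤ B := by positivity
    have hmv := Convex.norm_image_sub_le_of_norm_hasDerivWithin_le
      (f := fun t : ℝ => peval R ((0 : En n) + t • x))
      (f' := fun t : ℝ => ∑ i, x i * peval (pderiv i R) ((0 : En n) + t • x))
      (s := Set.Icc (0:ℝ) 1) (x := 0) (y := 1) (C := n * (‖x‖ * B))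
      (fun t _ => (peval_line R 0 x t).hasDerivWithinAt) (fun t ht => ?_) (convex_Icc 0 1)
      (by simp) (by simp)
    · simp only [zero_smul, one_smul, zero_add, sub_zero, Real.norm_eq_abs, abs_one, mul_one] at hmv
      rw [hR, ptrunc_zero_coeff, ← hR, sub_zero] at hmv
      refine hmv.trans (le_of_eq ?_)
      rw [hB, div_pow, pow_succ, pow_succ]; field_simp
    · rw [Real.norm_eq_abs]
      refine (Finset.abs_sum_le_sum_abs _ _).trans ?_
      have : ∀ i ∈ Finset.univ, |x i * peval (pderiv i R) ((0 : En n) + t • x)| ≤ ‖x‖ * B := by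
        intro i _
        rw [abs_mul]
        have h1 : |x i| ≤ ‖x‖ := by simpa using PiLp.norm_apply_le x i
        have h2 : ‖(0 : En n) + t • x‖ ≤ ‖x‖ := by
          rw [zero_add, norm_smul, Real.norm_eq_abs, abs_of_nonneg ht.1]
          nlinarith [norm_nonneg x, ht.2]
        exact mul_le_mul h1 (hd i _ h2) (abs_nonneg _) (norm_nonneg _)
      refine (Finset.sum_le_card_nsmul _ _ _ this).trans (by simp)

/-! pnorm -/

theorem pnorm_eq_of_subset (P : MvPolynomial (Fin n) ℝ) (s : Finset (Fin n →₀ ℕ))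
    (hs : P.support ⊆ s) : pnorm P = ∑ d ∈ s, (mfact d : ℝ) * |coeff d P| := by
  apply Finset.sum_subset hs
  intro d _ hd
  rw [notMem_support_iff.1 hd]; simp

theorem pnorm_nonneg (P : MvPolynomial (Fin n) ℝ) : 0 ≤ pnorm P :=
  Finset.sum_nonneg fun d _ => by positivity

theorem pnorm_add_le (P Q : MvPolynomial (Fin n) ℝ) : pnorm (P + Q) ≤ pnorm P + pnorm Q := by
  classical
  rw [pnorm_eq_of_subset (P + Q) (P.support ∪ Q.support) support_add,
    pnorm_eq_of_subset P (P.support ∪ Q.support) Finset.subset_union_left,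
    pnorm_eq_of_subset Q (P.support ∪ Q.support) Finset.subset_union_right,
    ← Finset.sum_add_distrib]
  refine Finset.sum_le_sum fun d _ => ?_
  rw [coeff_add, ← mul_add]
  gcongr
  exact abs_add_le _ _

theorem pnorm_C_mul (a : ℝ) (P : MvPolynomial (Fin n) ℝ) : pnorm (C a * P) = |a| * pnorm P := by
  rw [pnorm_eq_of_subset (C a * P) P.support, pnorm, Finset.mul_sum]
  · refine Finset.sum_congr rfl fun d _ => ?_
    rw [coeff_C_mul, abs_mul]; ring
  · intro d hd
    rw [mem_support_iff, coeff_C_mul] at hd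
    rw [mem_support_iff]
    exact right_ne_zero_of_mul hd

theorem pnorm_zero : pnorm (0 : MvPolynomial (Fin n) ℝ) = 0 := by simp [pnorm]

theorem pnorm_sum_le {ι : Type*} (s : Finset ι) (p : ι → MvPolynomial (Fin n) ℝ) :
    pnorm (∑ j ∈ s, p j) ≤ ∑ j ∈ s, pnorm (p j) := by
  classical
  induction s using Finset.induction_on with
  | empty => simp [pnorm_zero]
  | insert a s ha ih =>
    rw [Finset.sum_insert ha, Finset.sum_insert ha]
    exact (pnorm_add_le _ _).trans (by gcongr)

theorem abs_monomial_le (x : En n) (d : Fin n →₀ ℕ) : ∏ i, |x i| ^ d i ≤ ‖x‖ ^ mdeg d := by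
  rw [mdeg_eq, ← Finset.prod_pow_eq_pow_sum]
  apply Finset.prod_le_prod
  · intro i _; positivity
  · intro i _
    gcongr
    simpa using PiLp.norm_apply_le x i

theorem abs_peval_le_sum (Q : MvPolynomial (Fin n) ℝ) (x : En n) :
    |peval Q x| ≤ ∑ d ∈ Q.support, |coeff d Q| * ∏ i, |x i| ^ d i := by
  rw [peval, MvPolynomial.eval_eq']
  refine (Finset.abs_sum_le_sum_abs _ _).trans (le_of_eq ?_)
  refine Finset.sum_congr rfl fun d _ => ?_
  rw [abs_mul, Finset.abs_prod]
  simp [abs_pow]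

theorem abs_peval_le {Q : MvPolynomial (Fin n) ℝ} {m : ℕ} (hQ : Q.IsHomogeneous m) (x : En n) :
    |peval Q x| ≤ pnorm Q * ‖x‖ ^ m := by
  refine (abs_peval_le_sum Q x).trans ?_
  rw [pnorm, Finset.sum_mul]
  refine Finset.sum_le_sum fun d hd => ?_
  have h1 : mdeg d = m := by
    rw [← degree_eq_mdeg]
    have := hQ (mem_support_iff.1 hd)
    rw [Finsupp.degree_eq_weight_one]; exact this
  have h2 := abs_monomial_le x d
  rw [h1] at h2
  have h3 := one_le_mfact d
  have h4 : 0 ≤ ‖x‖ ^ m := by positivity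
  calc |coeff d Q| * ∏ i, |x i| ^ d i ≤ |coeff d Q| * ‖x‖ ^ m := by gcongr
    _ = 1 * |coeff d Q| * ‖x‖ ^ m := by ring
    _ ≤ _ := by gcongr

/-- all monomials contain x_n -/
def PForm (Q : MvPolynomial (Fin n) ℝ) : Prop := ∀ d, d (lastIdx n) = 0 → coeff d Q = 0

theorem abs_peval_form_le {Q : MvPolynomial (Fin n) ℝ} (hQ : PForm Q) (x : En n) (hx : ‖x‖ ≤ 1) :
    |peval Q x| ≤ pnorm Q * |xn x| := by
  classical
  refine (abs_peval_le_sum Q x).trans ?_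
  rw [pnorm, Finset.sum_mul]
  refine Finset.sum_le_sum fun d hd => ?_
  have h1 : d (lastIdx n) ≠ 0 := fun h => mem_support_iff.1 hd (hQ d h)
  have hxi : ∀ i, |x i| ≤ 1 := fun i => by
    have : |x i| ≤ ‖x‖ := by simpa using PiLp.norm_apply_le x i
    linarith
  have h2 : ∏ i, |x i| ^ d i ≤ |xn x| := by
    rw [← Finset.mul_prod_erase _ _ (Finset.mem_univ (lastIdx n))]
    have h5 : |x (lastIdx n)| ^ d (lastIdx n) ≤ |x (lastIdx n)| := by
      have := pow_le_pow_of_le_one (abs_nonneg _) (hxi (lastIdx n)) (Nat.one_le_iff_ne_zero.2 h1)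
      simpa using this
    have h6 : ∏ i ∈ Finset.univ.erase (lastIdx n), |x i| ^ d i ≤ 1 :=
      Finset.prod_le_one (fun i _ => by positivity)
        (fun i _ => pow_le_one₀ (abs_nonneg _) (hxi i))
    have h7 : 0 ≤ ∏ i ∈ Finset.univ.erase (lastIdx n), |x i| ^ d i :=
      Finset.prod_nonneg fun i _ => by positivity
    calc _ ≤ |x (lastIdx n)| * 1 := mul_le_mul h5 h6 h7 (abs_nonneg _)
      _ = _ := by simp [xn]
  have h3 := one_le_mfact d
  calc |coeff d Q| * ∏ i, |x i| ^ d i ≤ |coeff d Q| * |xn x| := by gcongr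
    _ = 1 * |coeff d Q| * |xn x| := by ring
    _ ≤ _ := by gcongr

theorem substLast_monomial (d : Fin n →₀ ℕ) (a : ℝ) :
    substLast 0 (monomial d a) = if d (lastIdx n) = 0 then monomial d a else 0 := by
  classical
  rw [substLast, aeval_monomial, Finsupp.prod_fintype _ _ (by simp)]
  split_ifs with h
  · rw [monomial_eq, Finsupp.prod_fintype _ _ (by simp)]
    congr 1
    refine Finset.prod_congr rfl fun i _ => ?_
    split_ifs with hi
    · subst hi; simp [h]
    · rfl
  · rw [Finset.prod_eq_zero (Finset.mem_univ (lastIdx n)), mul_zero]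
    simp [h]

theorem coeff_substLast (Q : MvPolynomial (Fin n) ℝ) (d : Fin n →₀ ℕ) :
    coeff d (substLast 0 Q) = if d (lastIdx n) = 0 then coeff d Q else 0 := by
  classical
  induction Q using MvPolynomial.induction_on' with
  | monomial e a =>
    rw [substLast_monomial]
    by_cases he : e = d
    · subst he
      split_ifs <;> simp
    · split_ifs <;> simp [coeff_monomial, he]
  | add p q hp hq =>
    have : substLast 0 (p + q) = substLast 0 p + substLast 0 q := by simp [substLast]
    rw [this, coeff_add, hp, hq, coeff_add]
    split_ifs <;> simp

theorem pform_iff (Q : MvPolynomial (Fin n) ℝ) : PForm Q ↔ substLast 0 Q = 0 := by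
  constructor
  · intro h
    ext d
    rw [coeff_substLast, coeff_zero]
    split_ifs with hd
    · exact h d hd
    · rfl
  · intro h d hd
    have := coeff_substLast Q d
    rw [h, if_pos hd, coeff_zero] at this
    exact this.symm

theorem PForm.add {P Q : MvPolynomial (Fin n) ℝ} (hP : PForm P) (hQ : PForm Q) : PForm (P + Q) :=
  fun d hd => by rw [coeff_add, hP d hd, hQ d hd, add_zero]

theorem PForm.C_mul {P : MvPolynomial (Fin n) ℝ} (a : ℝ) (hP : PForm P) : PForm (C a * P) :=
  fun d hd => by rw [coeff_C_mul, hP d hd, mul_zero]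

theorem PForm.sum {ι : Type*} (s : Finset ι) (p : ι → MvPolynomial (Fin n) ℝ)
    (h : ∀ j ∈ s, PForm (p j)) : PForm (∑ j ∈ s, p j) :=
  fun d hd => by
    rw [coeff_sum]; exact Finset.sum_eq_zero fun j hj => h j hj d hd

theorem PForm.hc {P : MvPolynomial (Fin n) ℝ} (j : ℕ) (hP : PForm P) :
    PForm (homogeneousComponent j P) :=
  fun d hd => by rw [coeff_homogeneousComponent]; simp [hP d hd]

/-- multi-indices of given degree -/
def degSet (n m : ℕ) : Finset (Fin n →₀ ℕ) := Finset.finsuppAntidiag Finset.univ m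

theorem mem_degSet (m : ℕ) (d : Fin n →₀ ℕ) : d ∈ degSet n m ↔ mdeg d = m := by
  simp [degSet, Finset.mem_finsuppAntidiag, mdeg_eq]

theorem support_subset_degSet {Q : MvPolynomial (Fin n) ℝ} {m : ℕ} (hQ : Q.IsHomogeneous m) :
    Q.support ⊆ degSet n m := by
  intro d hd
  rw [mem_degSet, ← degree_eq_mdeg]
  have := hQ (mem_support_iff.1 hd)
  rw [Finsupp.degree_eq_weight_one]; exact this

theorem pnorm_hc_bound (m : ℕ) : ∃ C : ℝ, 0 ≤ C ∧ ∀ (r M : ℝ) (h : MvPolynomial (Fin n) ℝ),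
    0 < r → 0 ≤ M → plap h = 0 → (∀ x : En n, ‖x‖ ≤ r → |peval h x| ≤ M) →
    pnorm (homogeneousComponent m h) ≤ C * M / r ^ m := by
  obtain ⟨C, hC, hb⟩ := coeff_bound (n := n) m
  refine ⟨(degSet n m).card * C, by positivity, fun r M h hr hM hh hM2 => ?_⟩
  rw [pnorm_eq_of_subset _ _ (support_subset_degSet (homogeneousComponent_isHomogeneous m h))]
  have : ∀ d ∈ degSet n m, (mfact d : ℝ) * |coeff d (homogeneousComponent m h)|
      ≤ C * M / r ^ m := by
    intro d hd
    have h1 := (mem_degSet m d).1 hd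
    rw [coeff_homogeneousComponent, degree_eq_mdeg, if_pos h1]
    exact hb r M h hr hM hh hM2 d h1
  refine (Finset.sum_le_card_nsmul _ _ _ this).trans (le_of_eq ?_)
  rw [nsmul_eq_mul]; ring


theorem homog_mono {d : Fin n →₀ ℕ} {a : ℝ} {m : ℕ} (h : mdeg d = m) :
    (monomial d a).IsHomogeneous m := isHomogeneous_monomial a h

theorem mono_solve (N : ℕ) : ∀ d : Fin n →₀ ℕ, ∑ i ∈ Finset.univ.erase (lastIdx n), d i = N →
    ∃ Q : MvPolynomial (Fin n) ℝ, Q.IsHomogeneous (mdeg d + 2) ∧ PForm Q ∧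
      plap Q = monomial d 1 := by
  induction N using Nat.strong_induction_on with
  | _ N ih =>
  intro d hd
  set l := lastIdx n with hl
  set D : Fin n →₀ ℕ := d + Finsupp.single l 1 + Finsupp.single l 1 with hD
  set c : ℝ := 1 / ((d l + 2) * (d l + 1)) with hc
  have hDdeg : mdeg D = mdeg d + 2 := by rw [hD, mdeg_add_single, mdeg_add_single]
  have key : ∀ i, ∃ Q : MvPolynomial (Fin n) ℝ, Q.IsHomogeneous (mdeg d + 2) ∧ PForm Q ∧
      (i ≠ l → plap Q = pderiv i (pderiv i (monomial D c))) := by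
    intro i
    by_cases hil : i = l
    · exact ⟨0, isHomogeneous_zero _ _ _, fun _ _ => by simp, fun h => absurd hil h⟩
    rw [pderiv_monomial, pderiv_monomial]
    have hDi : D i = d i := by simp [hD, Finsupp.single_apply, Ne.symm hil]
    have hDi' : (D - Finsupp.single i 1 : Fin n →₀ ℕ) i = d i - 1 := by simp [hDi]
    rw [hDi, hDi']
    by_cases h2 : 2 ≤ d i
    · set D' := D - Finsupp.single i 1 - Finsupp.single i 1 with hD'
      have hDD : D = D' + Finsupp.single i 1 + Finsupp.single i 1 := by
        ext j
        by_cases hj : j = i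
        · subst hj; simp [hD', hDi]; omega
        · simp [hD', Finsupp.single_apply, Ne.symm hj]
      have hs : ∑ j ∈ Finset.univ.erase l, D' j + 2 = N := by
        have e1 : ∑ j ∈ Finset.univ.erase l, D j = N := by
          rw [← hd]
          refine Finset.sum_congr rfl fun j hj => ?_
          simp [hD, Finsupp.single_apply, (Finset.ne_of_mem_erase hj).symm]
        rw [← e1, hDD]
        simp [Finset.sum_add_distrib, Finsupp.single_apply, hil]
      have hm : mdeg D' = mdeg d := by
        have : mdeg D = mdeg D' + 2 := by rw [hDD, mdeg_add_single, mdeg_add_single]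
        omega
      obtain ⟨Q, hQ1, hQ2, hQ3⟩ := ih _ (by omega) D' rfl
      refine ⟨C (c * d i * ((d i - 1 : ℕ):ℝ)) * Q, ?_, hQ2.C_mul _, fun _ => ?_⟩
      · rw [hm] at hQ1
        simpa using (isHomogeneous_C (Fin n) (c * d i * ((d i - 1 : ℕ):ℝ))).mul hQ1
      · rw [plap_C_mul, hQ3, C_mul_monomial, mul_one]
    · refine ⟨0, isHomogeneous_zero _ _ _, fun _ _ => by simp, fun _ => ?_⟩
      have : d i = 0 ∨ d i = 1 := by omega
      rcases this with h | h <;> simp [h, plap]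
  choose Q hQ1 hQ2 hQ3 using key
  refine ⟨monomial D c - ∑ i ∈ Finset.univ.erase l, Q i, ?_, ?_, ?_⟩
  · apply IsHomogeneous.sub (homog_mono hDdeg)
    exact IsHomogeneous.sum _ _ _ fun i _ => hQ1 i
  · intro e he
    rw [coeff_sub, PForm.sum _ _ (fun i _ => hQ2 i) e he, coeff_monomial, if_neg, sub_zero]
    rintro rfl
    simp [hD, ← hl] at he
  · rw [plap_sub, plap_sum, plap, ← Finset.add_sum_erase _ _ (Finset.mem_univ l)]
    rw [Finset.sum_congr rfl fun i hi => hQ3 i (Finset.ne_of_mem_erase hi), add_sub_cancel_right]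
    rw [pderiv_monomial, pderiv_monomial]
    have e1 : D - Finsupp.single l 1 - Finsupp.single l 1 = d := by
      rw [hD, add_tsub_cancel_right, add_tsub_cancel_right]
    have e2 : D l = d l + 2 := by simp [hD]
    have e3 : (D - Finsupp.single l 1 : Fin n →₀ ℕ) l = d l + 1 := by simp [e2]
    rw [e1, e2, e3]
    congr 1
    rw [hc]; push_cast; field_simp

/-- particular solutions -/
theorem poly_solve (m : ℕ) : ∃ K : ℝ, 0 ≤ K ∧ ∀ P : MvPolynomial (Fin n) ℝ, P.IsHomogeneous m →
    pnorm P ≤ 1 → ∃ Q : MvPolynomial (Fin n) ℝ, Q.IsHomogeneous (m + 2) ∧ PForm Q ∧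
      plap Q + P = 0 ∧ pnorm Q ≤ K := by
  choose Q hQ1 hQ2 hQ3 using fun d : Fin n →₀ ℕ => mono_solve _ d rfl
  refine ⟨∑ d ∈ degSet n m, pnorm (Q d), Finset.sum_nonneg fun d _ => pnorm_nonneg _, ?_⟩
  intro P hP hP1
  have hsub := support_subset_degSet hP
  refine ⟨∑ d ∈ P.support, C (- coeff d P) * Q d, ?_, ?_, ?_, ?_⟩
  · apply IsHomogeneous.sum
    intro d hd
    have h1 := hQ1 d
    rw [(mem_degSet m d).1 (hsub hd)] at h1
    simpa using (isHomogeneous_C (Fin n) (-coeff d P)).mul h1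
  · exact PForm.sum _ _ fun d _ => (hQ2 d).C_mul _
  · rw [plap_sum]
    simp only [plap_C_mul, hQ3, C_mul_monomial, mul_one]
    simp only [map_neg, Finset.sum_neg_distrib]
    rw [← MvPolynomial.as_sum P, neg_add_cancel]
  · refine (pnorm_sum_le _ _).trans ?_
    simp only [pnorm_C_mul, abs_neg]
    refine le_trans ?_ (Finset.sum_le_sum_of_subset_of_nonneg hsub
      fun d _ _ => pnorm_nonneg (Q d))
    refine Finset.sum_le_sum fun d hd => ?_
    have h1 : (mfact d : ℝ) * |coeff d P| ≤ pnorm P :=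
      Finset.single_le_sum (f := fun d => (mfact d : ℝ) * |coeff d P|)
        (fun e _ => by positivity) hd
    have h2 := one_le_mfact d
    have h3 : |coeff d P| ≤ 1 := by nlinarith [abs_nonneg (coeff d P)]
    nlinarith [pnorm_nonneg (Q d)]

theorem totalDegree_le_of {p : MvPolynomial (Fin n) ℝ} {m : ℕ}
    (h : ∀ d, coeff d p ≠ 0 → mdeg d ≤ m) : p.totalDegree ≤ m :=
  Finset.sup_le fun d hd => h d (mem_support_iff.1 hd)

theorem totalDegree_pderiv_le {p : MvPolynomial (Fin n) ℝ} {m : ℕ} (i : Fin n)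
    (h : p.totalDegree ≤ m + 1) : (pderiv i p).totalDegree ≤ m := by
  apply totalDegree_le_of
  intro d hd
  rw [coeff_pderiv] at hd
  have h1 := le_totalDegree (mem_support_iff.2 (left_ne_zero_of_mul hd))
  have h2 : mdeg (d + Finsupp.single i 1) ≤ p.totalDegree := h1
  rw [mdeg_add_single] at h2
  omega

theorem totalDegree_plap_le {p : MvPolynomial (Fin n) ℝ} {m : ℕ}
    (h : p.totalDegree ≤ m + 2) : (plap p).totalDegree ≤ m := by
  apply totalDegree_finsetSum_le
  intro i _
  exact totalDegree_pderiv_le i (totalDegree_pderiv_le i h)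

theorem totalDegree_psi (r : ℝ) : (C (r ^ 2) - rsq : MvPolynomial (Fin n) ℝ).totalDegree ≤ 2 := by
  refine (totalDegree_sub _ _).trans (max_le ((totalDegree_C _).le.trans (by norm_num)) ?_)
  apply totalDegree_finsetSum_le
  intro i _
  simp

theorem dirichlet_ball {r : ℝ} (hr : 0 < r) (p : MvPolynomial (Fin n) ℝ) :
    ∃ h : MvPolynomial (Fin n) ℝ, plap h = 0 ∧
      ∀ x : En n, ‖x‖ = r → peval h x = peval p x := by
  set ψ : MvPolynomial (Fin n) ℝ := C (r ^ 2) - rsq with hψ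
  have hψx : ∀ x : En n, peval ψ x = r ^ 2 - ‖x‖ ^ 2 := fun x => by
    rw [← peval_rsq]; simp [hψ, peval]
  set m := p.totalDegree with hm
  let T0 : MvPolynomial (Fin n) ℝ →ₗ[ℝ] MvPolynomial (Fin n) ℝ :=
    { toFun := fun q => plap (ψ * q)
      map_add' := fun a b => by rw [mul_add, plap_add]
      map_smul' := fun a b => by
        simp only [RingHom.id_apply, MvPolynomial.smul_eq_C_mul]
        rw [← plap_C_mul]; congr 1; ring }
  have hT0 : ∀ q ∈ restrictTotalDegree (Fin n) ℝ m, T0 q ∈ restrictTotalDegree (Fin n) ℝ m := by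
    intro q hq
    rw [mem_restrictTotalDegree] at hq ⊢
    apply totalDegree_plap_le
    refine (totalDegree_mul _ _).trans ?_
    have := totalDegree_psi (n := n) r
    rw [← hψ] at this
    omega
  let T := T0.restrict hT0
  have hinj : Function.Injective T := by
    rw [← LinearMap.ker_eq_bot, LinearMap.ker_eq_bot']
    rintro ⟨q, hq⟩ hTq
    have h0 : plap (ψ * q) = 0 := congrArg Subtype.val hTq
    have hz : ∀ x : En n, ‖x‖ = r → peval (ψ * q) x = 0 := by
      intro x hx
      have : peval (ψ * q) x = peval ψ x * peval q x := by simp [peval]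
      rw [this, hψx, hx]; simp
    have h1 := max_principle_poly (r := r) (ψ * q) (fun x _ => by rw [h0]; simp [peval])
      (m := 0) (fun x hx => (hz x hx).le)
    have h0' : plap (C (-1) * (ψ * q)) = 0 := by rw [plap_C_mul, h0, mul_zero]
    have hneg : ∀ x : En n, peval (C (-1) * (ψ * q)) x = - peval (ψ * q) x := by
      intro x; simp [peval]
    have h2 := max_principle_poly (r := r) (C (-1) * (ψ * q))
      (fun x _ => by rw [h0']; simp [peval]) (m := 0)
      (fun x hx => by rw [hneg, hz x hx]; simp)
    have h3 : ψ * q = 0 := by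
      ext d
      obtain ⟨K, hK, hb⟩ := coeff_bound (n := n) (mdeg d)
      have := hb r 0 (ψ * q) hr le_rfl h0 (fun x hx => by
        have a := h1 x hx
        have b := h2 x hx
        rw [hneg] at b
        rw [abs_le]; constructor <;> linarith) d rfl
      rw [mul_zero, zero_div] at this
      have h4 := one_le_mfact d
      have h5 := abs_nonneg (coeff d (ψ * q))
      have : |coeff d (ψ * q)| ≤ 0 := by nlinarith
      simpa using this
    have hψ0 : ψ ≠ 0 := by
      intro h
      have := hψx 0
      rw [h] at this
      simp [peval] at this
      exact (pow_pos hr 2).ne this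
    have : q = 0 := (mul_eq_zero.1 h3).resolve_left hψ0
    exact Subtype.ext this
  have hsurj : Function.Surjective T := LinearMap.injective_iff_surjective.1 hinj
  have hpl : plap p ∈ restrictTotalDegree (Fin n) ℝ m := by
    rw [mem_restrictTotalDegree]
    exact totalDegree_plap_le (by omega)
  obtain ⟨⟨q, hq⟩, hTq⟩ := hsurj ⟨plap p, hpl⟩
  have h0 : plap (ψ * q) = plap p := congrArg Subtype.val hTq
  refine ⟨p - ψ * q, by rw [plap_sub, h0, sub_self], fun x hx => ?_⟩
  have : peval (p - ψ * q) x = peval p x - peval ψ x * peval q x := by simp [peval]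
  rw [this, hψx, hx]; simp

theorem stone_sphere {r : ℝ} (φ : En n → ℝ) (hφ : ContinuousOn φ (sphere (0 : En n) r))
    {ε : ℝ} (hε : 0 < ε) : ∃ p : MvPolynomial (Fin n) ℝ,
      ∀ x : En n, ‖x‖ = r → |peval p x - φ x| < ε := by
  let K := sphere (0 : En n) r
  let co : Fin n → C(K, ℝ) := fun i => ⟨fun x => (x : En n) i, by fun_prop⟩
  let F : MvPolynomial (Fin n) ℝ →ₐ[ℝ] C(K, ℝ) := MvPolynomial.aeval co
  have hF : ∀ p (x : K), F p x = peval p (x : En n) := by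
    intro p x
    induction p using MvPolynomial.induction_on with
    | C a => simp [F, peval]
    | add p q hp hq => 
      simp only [map_add, ContinuousMap.add_apply, hp, hq]; simp [peval]
    | mul_X p j hp =>
      simp only [map_mul, ContinuousMap.mul_apply, hp]; simp [peval, F, co]
  have hsep : F.range.SeparatesPoints := by
    intro x y hxy
    have : ∃ i, (x : En n) i ≠ (y : En n) i := by
      by_contra hcon
      push Not at hcon
      exact hxy (Subtype.ext (PiLp.ext hcon))
    obtain ⟨i, hi⟩ := this
    refine ⟨F (X i), ⟨F (X i), ⟨X i, rfl⟩, rfl⟩, ?_⟩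
    rw [hF, hF]; simpa [peval] using hi
  obtain ⟨⟨g, ⟨p, hp⟩⟩, hg⟩ :=
    ContinuousMap.exists_mem_subalgebra_near_continuousMap_of_separatesPoints F.range hsep
      ⟨fun x => φ x.1, continuousOn_iff_continuous_domRestrict.1 hφ⟩ ε hε
  refine ⟨p, fun x hx => ?_⟩
  have hxK : x ∈ K := by simp [K, hx]
  have h1 := (ContinuousMap.norm_coe_le_norm _ (⟨x, hxK⟩ : K)).trans_lt hg
  have h2 : F p = g := hp
  have h3 := hF p ⟨x, hxK⟩
  simp only [ContinuousMap.sub_apply, Real.norm_eq_abs] at h1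
  rw [← h2, h3] at h1
  exact h1

/-- reflection in x_n -/
def rf (x : En n) : En n := WithLp.toLp 2 fun i => if i = lastIdx n then - x i else x i

theorem rf_apply (x : En n) (i : Fin n) : rf x i = if i = lastIdx n then - x i else x i := rfl

theorem xn_rf (x : En n) : xn (rf x) = - xn x := by simp [xn, rf_apply]

theorem norm_rf (x : En n) : ‖rf x‖ = ‖x‖ := by
  rw [EuclideanSpace.norm_eq, EuclideanSpace.norm_eq]
  congr 1
  refine Finset.sum_congr rfl fun i _ => ?_
  rw [rf_apply]; split_ifs <;> simp

theorem rf_rf (x : En n) : rf (rf x) = x := by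
  apply PiLp.ext
  intro i
  rw [rf_apply, rf_apply]
  split_ifs <;> simp

/-- reflection of polynomials -/
def prf (p : MvPolynomial (Fin n) ℝ) : MvPolynomial (Fin n) ℝ :=
  MvPolynomial.aeval (fun i => if i = lastIdx n then - X i else X i) p

theorem peval_prf (p : MvPolynomial (Fin n) ℝ) (x : En n) : peval (prf p) x = peval p (rf x) := by
  induction p using MvPolynomial.induction_on with
  | C a => simp [prf, peval]
  | add p q hp hq => 
    simp only [peval, prf, map_add] at *; rw [hp, hq]
  | mul_X p j hp =>
    simp only [peval, prf, map_mul, aeval_X, eval_X] at *; rw [hp, rf_apply]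
    split_ifs <;> simp

theorem pderiv_prf (i : Fin n) (p : MvPolynomial (Fin n) ℝ) :
    pderiv i (prf p) = (if i = lastIdx n then -1 else 1) * prf (pderiv i p) := by
  induction p using MvPolynomial.induction_on with
  | C a => simp [prf]
  | add p q hp hq => 
    simp only [prf, map_add] at *; rw [hp, hq]; ring
  | mul_X p j hp =>
    have e1 : prf (p * X j) = prf p * (if j = lastIdx n then - X j else X j) := by
      simp [prf]
    have e2 : prf (pderiv i (p * X j)) = prf (pderiv i p) * (if j = lastIdx n then - X j else X j)
        + prf p * (if i = j then 1 else 0) := by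
      rw [pderiv_mul, pderiv_X]
      by_cases hij : i = j
      · subst hij; simp [prf]
      · simp [prf, hij, Ne.symm hij]
    rw [e1, e2, pderiv_mul, hp, mul_add, ← mul_assoc]
    congr 1
    by_cases hij : i = j
    · subst hij
      by_cases h : i = lastIdx n
      · simp only [if_pos h, if_pos rfl]; simp
      · simp only [if_neg h, if_pos rfl]; simp
    · have : pderiv i (if j = lastIdx n then - X j else X j : MvPolynomial (Fin n) ℝ) = 0 := by
        split_ifs <;> simp [Ne.symm hij]
      rw [this]; simp [hij]

theorem plap_prf (p : MvPolynomial (Fin n) ℝ) : plap (prf p) = prf (plap p) := by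
  have : prf (plap p) = ∑ i, prf (pderiv i (pderiv i p)) := by simp [plap, prf]
  rw [this, plap]
  refine Finset.sum_congr rfl fun i _ => ?_
  rw [pderiv_prf]
  split_ifs <;> simp [pderiv_prf, *]

theorem pform_odd (p : MvPolynomial (Fin n) ℝ) : PForm (p - prf p) := by
  rw [pform_iff]
  have : substLast 0 (prf p) = substLast 0 p := by
    induction p using MvPolynomial.induction_on with
    | C a => simp [prf, substLast]
    | add p q hp hq => 
      simp only [prf, substLast, map_add] at *; rw [hp, hq]
    | mul_X p j hp =>
      simp only [prf, substLast, map_mul, aeval_X] at *; rw [hp]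
      split_ifs with h <;> simp [h]
  have h2 : substLast 0 (p - prf p) = substLast 0 p - substLast 0 (prf p) := by simp [substLast]
  rw [h2, this, sub_self]


/-- normalized hypotheses -/
structure Hyp (α δ : ℝ) (Ω : Set (En n)) (u : En n → ℝ) : Prop where
  ho : IsOpen Ω
  h0 : (0 : En n) ∉ Ω
  up : ∀ x : En n, ‖x‖ < 1 → xn x > δ → x ∈ Ω
  dn : ∀ x : En n, ‖x‖ < 1 → xn x < -δ → x ∉ Ω
  cu : ContinuousOn u (closure Ω ∩ ball 0 1)
  lap : ∀ x ∈ Ω ∩ ball (0 : En n) 1, ∃ L, |L| ≤ δ * ‖x‖ ^ (α - 1) ∧ Lap2 u x L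
  bd : ∀ x ∈ Ω ∩ ball (0 : En n) 1, |u x| ≤ 1
  fr : ∀ x ∈ frontier Ω ∩ ball (0 : En n) 1, |u x| ≤ δ

theorem continuous_xn : Continuous (xn : En n → ℝ) := by unfold xn; fun_prop

theorem abs_xn_le (x : En n) : |xn x| ≤ ‖x‖ := by
  have := PiLp.norm_apply_le x (lastIdx n)
  simpa [xn] using this

theorem Hyp.neg {α δ : ℝ} {Ω : Set (En n)} {u : En n → ℝ} (H : Hyp α δ Ω u) :
    Hyp α δ Ω (fun x => - u x) where
  ho := H.ho
  h0 := H.h0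
  up := H.up
  dn := H.dn
  cu := H.cu.neg
  lap := fun x hx => by
    obtain ⟨L, h1, h2⟩ := H.lap x hx
    exact ⟨-L, by rwa [abs_neg], h2.neg⟩
  bd := fun x hx => by rw [abs_neg]; exact H.bd x hx
  fr := fun x hx => by rw [abs_neg]; exact H.fr x hx

theorem Hyp.closure_ge {α δ : ℝ} {Ω : Set (En n)} {u : En n → ℝ} (H : Hyp α δ Ω u) {x : En n}
    (hx : x ∈ closure Ω) (h1 : ‖x‖ < 1) : -δ ≤ xn x := by
  by_contra hcon
  push Not at hcon
  have ho : IsOpen (ball (0 : En n) 1 ∩ {y | xn y < -δ}) :=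
    isOpen_ball.inter (isOpen_lt continuous_xn continuous_const)
  obtain ⟨y, ⟨hy1, hy2⟩, hy3⟩ := mem_closure_iff.1 hx _ ho ⟨by simpa using h1, hcon⟩
  exact H.dn y (by simpa using hy1) hy2 hy3

theorem Hyp.frontier_le {α δ : ℝ} {Ω : Set (En n)} {u : En n → ℝ} (H : Hyp α δ Ω u) {x : En n}
    (hx : x ∈ frontier Ω) (h1 : ‖x‖ < 1) : |xn x| ≤ δ := by
  rw [abs_le]
  refine ⟨H.closure_ge hx.1 h1, ?_⟩
  by_contra hcon
  push Not at hcon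
  have := hx.2
  rw [H.ho.interior_eq] at this
  exact this (H.up x h1 hcon)

theorem Hyp.closure_cases {α δ : ℝ} {Ω : Set (En n)} {u : En n → ℝ} (H : Hyp α δ Ω u) {x : En n}
    (hx : x ∈ closure Ω) : x ∈ Ω ∨ x ∈ frontier Ω := by
  by_cases h : x ∈ Ω
  · exact Or.inl h
  · exact Or.inr ⟨hx, by rwa [H.ho.interior_eq]⟩

theorem Hyp.closure_bd {α δ : ℝ} {Ω : Set (En n)} {u : En n → ℝ} (H : Hyp α δ Ω u) (hδ : δ ≤ 1)
    {x : En n} (hx : x ∈ closure Ω) (h1 : ‖x‖ < 1) : |u x| ≤ 1 := by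
  have hb : x ∈ ball (0 : En n) 1 := by simpa using h1
  rcases H.closure_cases hx with h | h
  · exact H.bd x ⟨h, hb⟩
  · exact (H.fr x ⟨h, hb⟩).trans hδ

theorem frontier_inter_ball {Ω : Set (En n)} (ho : IsOpen Ω) {r : ℝ} {x : En n}
    (hx : x ∈ frontier (Ω ∩ ball (0 : En n) r)) :
    x ∈ closure Ω ∧ ‖x‖ ≤ r ∧ (‖x‖ = r ∨ x ∈ frontier Ω) := by
  have h1 : x ∈ closure Ω := closure_mono inter_subset_left hx.1
  have h2 : x ∈ closedBall (0 : En n) r :=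
    closure_ball_subset_closedBall (closure_mono inter_subset_right hx.1)
  have h2' : ‖x‖ ≤ r := by simpa using h2
  refine ⟨h1, h2', ?_⟩
  rcases h2'.lt_or_eq with h | h
  · right
    refine ⟨h1, ?_⟩
    have := hx.2
    rw [(ho.inter isOpen_ball).interior_eq] at this
    rw [ho.interior_eq]
    exact fun hO => this ⟨hO, by simpa using h⟩
  · exact Or.inl h

/-- barrier polynomial -/
def barr (x0 : En n) (δ : ℝ) : MvPolynomial (Fin n) ℝ :=
  C 64 * ((rsq - C 2 * ∑ i, C (x0 i) * X i + C (‖x0‖ ^ 2))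
    - C (n : ℝ) * (X (lastIdx n) + C δ) ^ 2 + C (2 * (n:ℝ)) * (X (lastIdx n) + C δ))

theorem peval_barr (x0 : En n) (δ : ℝ) (x : En n) :
    peval (barr x0 δ) x = 64 * (‖x - x0‖ ^ 2 - n * (xn x + δ) ^ 2 + 2 * n * (xn x + δ)) := by
  have h : ‖x - x0‖ ^ 2 = ‖x‖ ^ 2 - 2 * ∑ i, x0 i * x i + ‖x0‖ ^ 2 := by
    rw [EuclideanSpace.norm_sq_eq, EuclideanSpace.norm_sq_eq, EuclideanSpace.norm_sq_eq,
      Finset.mul_sum, ← Finset.sum_sub_distrib, ← Finset.sum_add_distrib]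
    refine Finset.sum_congr rfl fun i _ => ?_
    simp only [Real.norm_eq_abs, sq_abs, PiLp.sub_apply]; ring
  rw [h, ← peval_rsq x]
  simp [peval, barr, xn]

theorem plap_C' (a : ℝ) : plap (C a : MvPolynomial (Fin n) ℝ) = 0 := by simp [plap]

theorem plap_X (i : Fin n) : plap (X i : MvPolynomial (Fin n) ℝ) = 0 := by
  unfold plap
  refine Finset.sum_eq_zero fun j _ => ?_
  rw [pderiv_X]
  by_cases h : i = j
  · subst h; simp
  · simp [h]

theorem plap_Xsq (i : Fin n) (δ : ℝ) :
    plap ((X i + C δ) ^ 2 : MvPolynomial (Fin n) ℝ) = C 2 := by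
  unfold plap
  rw [Finset.sum_eq_single i]
  · rw [pow_two, pderiv_mul]
    simp only [map_add, pderiv_X_self, pderiv_C, add_zero, one_mul, mul_one]
    rw [one_add_one_eq_two]
    exact (map_ofNat C 2).symm
  · intro j _ hj
    rw [pow_two, pderiv_mul]
    simp [pderiv_X_of_ne hj.symm]
  · simp

theorem plap_barr (x0 : En n) (δ : ℝ) : plap (barr x0 δ) = 0 := by
  unfold barr
  simp only [plap_C_mul, plap_add, plap_sub, plap_sum, plap_X, plap_C', plap_Xsq, plap_rsq]
  simp only [mul_zero, Finset.sum_const_zero, sub_zero, add_zero, ← map_mul, ← map_sub]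
  simp [mul_comm]

theorem barrier (hn : 2 ≤ n) {α δ : ℝ} (h0 : 0 < α) (h1 : α < 1) (hδ0 : 0 < δ) (hδ : δ ≤ 1)
    {Ω : Set (En n)} {u : En n → ℝ} (H : Hyp α δ Ω u) {x0 : En n} (hx0 : x0 ∈ Ω)
    (hx1 : ‖x0‖ ≤ 3 / 4) : u x0 ≤ 128 * n * (xn x0 + δ) + 2 * δ := by
  set V := Ω ∩ ball (0 : En n) (7 / 8) with hV
  have hVo : IsOpen V := H.ho.inter isOpen_ball
  have hVb : V ⊆ ball 0 1 := fun x hx => ball_subset_ball (by norm_num) hx.2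
  have hcl : closure V ⊆ closure Ω ∩ ball 0 1 := fun x hx => by
    refine ⟨closure_mono inter_subset_left hx, ?_⟩
    have := closure_ball_subset_closedBall (closure_mono inter_subset_right hx)
    exact closedBall_subset_ball (by norm_num) this
  have hn0 : (2:ℝ) ≤ n := by exact_mod_cast hn
  have key := max_principle2 hn h0 h1 hVo hVb (fun h => H.h0 h.1)
    (w := fun x => u x - peval (barr x0 δ) x)
    ((H.cu.mono hcl).sub (continuous_peval _).continuousOn) hδ0.le (m := δ) (by
      intro x hx
      obtain ⟨L, hL1, hL2⟩ := H.lap x ⟨hx.1, hVb hx⟩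
      refine ⟨_, ?_, hL2.sub (lap2_peval _ x)⟩
      rw [plap_barr]
      have : peval (0 : MvPolynomial (Fin n) ℝ) x = 0 := by simp [peval]
      rw [this, sub_zero]
      exact (abs_le.1 hL1).1) (by
      intro x hx
      obtain ⟨a1, a2, a3⟩ := frontier_inter_ball H.ho hx
      have hx1' : ‖x‖ < 1 := by linarith
      have b1 := H.closure_ge a1 hx1'
      have b2 := (le_abs_self _).trans (abs_xn_le x)
      rw [peval_barr]
      have c1 : 0 ≤ (n:ℝ) * ((xn x + δ) * (2 - (xn x + δ))) := by
        apply mul_nonneg (by linarith)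
        apply mul_nonneg <;> linarith
      rcases a3 with h | h
      · have c2 := (abs_le.1 (H.closure_bd hδ a1 hx1')).2
        have c3 : 1 / 8 ≤ ‖x - x0‖ := by
          have := norm_sub_norm_le x x0
          linarith
        nlinarith
      · have c2 := (abs_le.1 (H.fr x ⟨h, by simpa using hx1'⟩)).2
        nlinarith [sq_nonneg ‖x - x0‖])
  have := key x0 ⟨hx0, by simp; linarith⟩
  simp only [peval_barr, sub_self, norm_zero] at this
  nlinarith [mul_nonneg (by linarith : (0:ℝ) ≤ n) (sq_nonneg (xn x0 + δ))]

theorem barrier_abs (hn : 2 ≤ n) {α δ : ℝ} (h0 : 0 < α) (h1 : α < 1) (hδ0 : 0 < δ) (hδ : δ ≤ 1)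
    {Ω : Set (En n)} {u : En n → ℝ} (H : Hyp α δ Ω u) {x0 : En n} (hx0 : x0 ∈ closure Ω)
    (hx1 : ‖x0‖ ≤ 3 / 4) : |u x0| ≤ 128 * n * (xn x0 + δ) + 2 * δ := by
  rcases H.closure_cases hx0 with h | h
  · rw [abs_le]
    constructor
    · have := barrier hn h0 h1 hδ0 hδ H.neg h hx1
      linarith
    · exact barrier hn h0 h1 hδ0 hδ H h hx1
  · have := H.fr x0 ⟨h, by simp; linarith⟩
    have b1 := H.closure_ge hx0 (by linarith)
    have : 0 ≤ 128 * (n:ℝ) * (xn x0 + δ) := mul_nonneg (by positivity) (by linarith)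
    linarith

theorem half_ball {h : MvPolynomial (Fin n) ℝ} (hh : plap h = 0)
    (hodd : ∀ x, peval h (rf x) = - peval h x) {K δ : ℝ} (hδ : 0 ≤ δ)
    (hs : ∀ x : En n, ‖x‖ = 3 / 4 → 0 ≤ xn x → |peval h x| ≤ K * xn x + δ) :
    ∀ x : En n, ‖x‖ ≤ 3 / 4 → |peval h x| ≤ K * |xn x| + δ := by
  have main : ∀ g : MvPolynomial (Fin n) ℝ, plap g = 0 → (∀ x, peval g (rf x) = - peval g x) →
      (∀ x : En n, ‖x‖ = 3 / 4 → 0 ≤ xn x → |peval g x| ≤ K * xn x + δ) →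
      ∀ x : En n, ‖x‖ < 3 / 4 → 0 < xn x → peval g x ≤ K * xn x + δ := by
    intro g hg hgo hgs x hx1 hx2
    set V := {y : En n | 0 < xn y} ∩ ball (0 : En n) (3 / 4) with hV
    have hVo' : IsOpen {y : En n | 0 < xn y} := isOpen_lt continuous_const continuous_xn
    have hVo : IsOpen V := hVo'.inter isOpen_ball
    set q := g - C K * X (lastIdx n) with hq
    have hqx : ∀ y, peval q y = peval g y - K * xn y := fun y => by simp [hq, peval, xn]
    have := max_principle hVo (isBounded_ball.subset inter_subset_right)
      (w := peval q) (continuous_peval q).continuousOn (m := δ)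
      (fun y _ => ⟨_, by
        rw [hq, plap_sub, hg, plap_C_mul, plap_X]; simp [peval], lap2_peval q y⟩)
      (by
        intro y hy
        obtain ⟨a1, a2, a3⟩ := frontier_inter_ball hVo' hy
        have b1 : 0 ≤ xn y := by
          have : closure {y : En n | 0 < xn y} ⊆ {y | 0 ≤ xn y} :=
            closure_minimal (fun z (hz : 0 < xn z) => show 0 ≤ xn z from hz.le) (isClosed_le continuous_const continuous_xn)
          exact this a1
        rw [hqx]
        rcases a3 with h | h
        · have := (abs_le.1 (hgs y h b1)).2
          linarith
        · have h2 := h.2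
          rw [hVo'.interior_eq] at h2
          have h3 : xn y = 0 := le_antisymm (not_lt.1 h2) b1
          have h4 : rf y = y := by
            apply PiLp.ext
            intro i
            rw [rf_apply]
            split_ifs with hi
            · subst hi
              have : y (lastIdx n) = 0 := h3
              rw [this]; simp
            · rfl
          have h5 := hgo y
          rw [h4] at h5
          rw [h3]; linarith) x ⟨hx2, by simpa using hx1⟩
    rw [hqx] at this
    linarith
  have pos : ∀ x : En n, ‖x‖ ≤ 3 / 4 → 0 ≤ xn x → |peval h x| ≤ K * |xn x| + δ := by
    intro x hx hx2
    rw [abs_of_nonneg hx2]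
    rcases hx.lt_or_eq with h1 | h1
    · rcases hx2.lt_or_eq with h2 | h2
      · rw [abs_le]
        constructor
        · have := main (C (-1) * h) (by rw [plap_C_mul, hh, mul_zero])
            (fun x => by have := hodd x; simp [peval] at this ⊢; linarith)
            (fun x a b => by have := hs x a b; simpa [peval] using this) x h1 h2
          simp [peval] at this ⊢; linarith
        · exact main h hh hodd hs x h1 h2
      · have h4 : rf x = x := by
          apply PiLp.ext
          intro i
          rw [rf_apply]
          split_ifs with hi
          · subst hi
            have : x (lastIdx n) = 0 := h2.symm
            rw [this]; simp
          · rfl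
        have h5 := hodd x
        rw [h4] at h5
        have : peval h x = 0 := by linarith
        rw [this, ← h2]; simpa using hδ
    · exact hs x h1 hx2
  intro x hx
  rcases le_total 0 (xn x) with h1 | h1
  · exact pos x hx h1
  · have := pos (rf x) (by rwa [norm_rf]) (by rw [xn_rf]; linarith)
    rwa [hodd, abs_neg, xn_rf, abs_neg] at this

/-- the cutoff -/
def chi (δ t : ℝ) : ℝ := min 1 (max 0 ((t - 2 * δ) / δ))

theorem chi_nonneg (δ t : ℝ) : 0 ≤ chi δ t := le_min zero_le_one (le_max_left _ _)
theorem chi_le (δ t : ℝ) : chi δ t ≤ 1 := min_le_left _ _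
theorem chi_eq_zero {δ t : ℝ} (hδ : 0 < δ) (h : t ≤ 2 * δ) : chi δ t = 0 := by
  unfold chi
  rw [max_eq_left (div_nonpos_of_nonpos_of_nonneg (by linarith) hδ.le)]; simp
theorem chi_eq_one {δ t : ℝ} (hδ : 0 < δ) (h : 3 * δ ≤ t) : chi δ t = 1 := by
  unfold chi
  have : 1 ≤ (t - 2 * δ) / δ := by rw [le_div_iff₀ hδ]; linarith
  exact min_eq_left (this.trans (le_max_right _ _))
theorem continuous_chi (δ : ℝ) : Continuous (chi δ) := by unfold chi; fun_prop

theorem approx (hn : 2 ≤ n) : ∃ A : ℝ, 1 ≤ A ∧ ∀ (α δ : ℝ), 0 < α → α < 1 → 0 < δ → δ ≤ 1 →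
    ∀ (Ω : Set (En n)) (u : En n → ℝ), Hyp α δ Ω u →
    ∃ h : MvPolynomial (Fin n) ℝ, plap h = 0 ∧ PForm h ∧
      (∀ x, peval h (rf x) = - peval h x) ∧
      (∀ x : En n, ‖x‖ ≤ 3 / 4 → |peval h x| ≤ A) ∧
      (∀ x : En n, ‖x‖ ≤ 3 / 4 → |xn x| ≤ δ → |peval h x| ≤ A * δ) ∧
      (∀ x ∈ Ω, ‖x‖ < 3 / 4 → |u x - peval h x| ≤ A * δ) := by
  set M : ℝ := 128 * n with hM
  have hM0 : 0 ≤ M := by positivity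
  set K : ℝ := 2 * M + 2 with hK
  refine ⟨K + 4 * M + 6, by linarith, ?_⟩
  intro α δ h0 h1 hδ0 hδ Ω u H
  set ψ : En n → ℝ := fun x => chi δ (xn x) * u x with hψ
  have hψ0 : ∀ x, xn x ≤ 2 * δ → ψ x = 0 := fun x hx => by simp [hψ, chi_eq_zero hδ0 hx]
  have hψb : ∀ x : En n, ‖x‖ ≤ 3 / 4 → 0 ≤ xn x → |ψ x| ≤ K * xn x := by
    intro x hx hx0
    by_cases h2 : xn x ≤ 2 * δ
    · rw [hψ0 x h2, abs_zero]; exact mul_nonneg (by linarith) hx0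
    · push Not at h2
      have hxO := H.up x (by linarith) (by linarith)
      have := barrier_abs hn h0 h1 hδ0 hδ H (subset_closure hxO) hx
      have h3 : |ψ x| ≤ |u x| := by
        simp only [hψ, abs_mul, abs_of_nonneg (chi_nonneg δ (xn x))]
        exact mul_le_of_le_one_left (abs_nonneg _) (chi_le _ _)
      rw [← hM] at this
      nlinarith
  have hψu : ∀ x ∈ closure Ω, ‖x‖ ≤ 3 / 4 → |u x - ψ x| ≤ (4 * M + 2) * δ := by
    intro x hx hx1
    by_cases h2 : 3 * δ ≤ xn x
    · have : ψ x = u x := by simp [hψ, chi_eq_one hδ0 h2]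
      rw [this, sub_self, abs_zero]
      exact mul_nonneg (by linarith) hδ0.le
    · push Not at h2
      have := barrier_abs hn h0 h1 hδ0 hδ H hx hx1
      have e : u x - ψ x = (1 - chi δ (xn x)) * u x := by simp only [hψ]; ring
      have h3 : |u x - ψ x| ≤ |u x| := by
        rw [e, abs_mul, abs_of_nonneg (by linarith [chi_le δ (xn x)])]
        exact mul_le_of_le_one_left (abs_nonneg _) (by linarith [chi_nonneg δ (xn x)])
      rw [← hM] at this
      nlinarith
  have hψc : ContinuousOn ψ (sphere (0 : En n) (3 / 4)) := by
    intro x hx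
    have hx' : ‖x‖ = 3 / 4 := by simpa using hx
    apply ContinuousAt.continuousWithinAt
    by_cases h2 : xn x < 2 * δ
    · have : ψ =ᶠ[𝓝 x] fun _ => 0 := by
        filter_upwards [(isOpen_lt continuous_xn continuous_const).mem_nhds h2] with y hy
        exact hψ0 y (le_of_lt hy)
      exact continuousAt_const.congr this.symm
    · push Not at h2
      have hxO := H.up x (by linarith) (by linarith)
      have : closure Ω ∩ ball (0 : En n) 1 ∈ 𝓝 x := by
        apply mem_of_superset ((H.ho.inter isOpen_ball).mem_nhds
          (⟨hxO, by simp [hx']; norm_num⟩ : x ∈ Ω ∩ ball (0 : En n) 1))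
        exact inter_subset_inter_left _ subset_closure
      exact ((continuous_chi δ).comp continuous_xn).continuousAt.mul (H.cu.continuousAt this)
  obtain ⟨p, hp⟩ := stone_sphere ψ hψc (half_pos hδ0)
  obtain ⟨h1', hh1, hh2⟩ := dirichlet_ball (by norm_num : (0:ℝ) < 3 / 4) p
  set h := h1' - prf h1' with hh
  have hhx : ∀ x, peval h x = peval h1' x - peval h1' (rf x) := fun x => by
    rw [← peval_prf]; simp [hh, peval]
  have hh0 : plap h = 0 := by
    rw [hh, plap_sub, plap_prf, hh1]; simp [prf]
  have hodd : ∀ x, peval h (rf x) = - peval h x := fun x => by rw [hhx, hhx, rf_rf]; ring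
  have hhψ : ∀ x : En n, ‖x‖ = 3 / 4 → 0 ≤ xn x → |peval h x - ψ x| ≤ δ := by
    intro x hx hx0
    have a1 := hp x hx
    have a2 := hp (rf x) (by rwa [norm_rf])
    rw [hψ0 (rf x) (by rw [xn_rf]; linarith)] at a2
    rw [hhx, hh2 x hx, hh2 (rf x) (by rwa [norm_rf])]
    rw [abs_lt] at a1 a2
    rw [abs_le]
    constructor <;> linarith
  have hb := half_ball hh0 hodd hδ0.le (K := K) (by
    intro x hx hx0
    have a1 := hhψ x hx hx0
    have a2 := hψb x hx.le hx0
    rw [abs_le] at a1 a2 ⊢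
    constructor <;> linarith)
  have hstrip : ∀ x : En n, ‖x‖ ≤ 3 / 4 → |xn x| ≤ δ → |peval h x| ≤ (K + 1) * δ := by
    intro x hx hx0
    have := hb x hx
    nlinarith
  have hMδ : 0 ≤ M * δ := mul_nonneg hM0 hδ0.le
  have hmain : ∀ v : En n → ℝ, ∀ g : MvPolynomial (Fin n) ℝ, Hyp α δ Ω v → plap g = 0 →
      (∀ x ∈ closure Ω, ‖x‖ ≤ 3 / 4 → (‖x‖ = 3 / 4 ∨ x ∈ frontier Ω) →
        v x - peval g x ≤ (K + 4 * M + 5) * δ) →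
      ∀ x ∈ Ω, ‖x‖ < 3 / 4 → v x - peval g x ≤ (K + 4 * M + 6) * δ := by
    intro v g Hv hg hvg x hx hx1
    have hVb : Ω ∩ ball (0 : En n) (3 / 4) ⊆ ball 0 1 :=
      fun x hx => ball_subset_ball (by norm_num) hx.2
    have hcl : closure (Ω ∩ ball (0 : En n) (3 / 4)) ⊆ closure Ω ∩ ball 0 1 := fun x hx => by
      refine ⟨closure_mono inter_subset_left hx, ?_⟩
      have := closure_ball_subset_closedBall (closure_mono inter_subset_right hx)
      exact closedBall_subset_ball (by norm_num) this
    have := max_principle2 hn h0 h1 (Hv.ho.inter isOpen_ball) hVb (fun h => Hv.h0 h.1)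
      (w := fun x => v x - peval g x)
      ((Hv.cu.mono hcl).sub (continuous_peval _).continuousOn) hδ0.le
      (m := (K + 4 * M + 5) * δ) (by
        intro x hx
        obtain ⟨L, hL1, hL2⟩ := Hv.lap x ⟨hx.1, hVb hx⟩
        refine ⟨_, ?_, hL2.sub (lap2_peval _ x)⟩
        rw [hg]
        have : peval (0 : MvPolynomial (Fin n) ℝ) x = 0 := by simp [peval]
        rw [this, sub_zero]
        exact (abs_le.1 hL1).1) (by
        intro x hx
        obtain ⟨a1, a2, a3⟩ := frontier_inter_ball Hv.ho hx
        exact hvg x a1 a2 a3) x ⟨hx, by simpa using hx1⟩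
    linarith
  have hbdry : ∀ x ∈ closure Ω, ‖x‖ ≤ 3 / 4 → (‖x‖ = 3 / 4 ∨ x ∈ frontier Ω) →
        |u x - peval h x| ≤ (K + 4 * M + 5) * δ := by
    intro x hx hx1 hx2
    have hKδ : 0 ≤ K * δ := mul_nonneg (by linarith) hδ0.le
    by_cases hfr : x ∈ frontier Ω
    · have a1 := H.frontier_le hfr (by linarith)
      have a2 := hstrip x hx1 a1
      have a3 := H.fr x ⟨hfr, by simp; linarith⟩
      rw [abs_le] at a2 a3 ⊢
      constructor <;> linarith
    · have hx3 := hx2.resolve_right hfr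
      rcases le_total 0 (xn x) with c | c
      · have a1 := hhψ x hx3 c
        have a2 := hψu x hx hx1
        rw [abs_le] at a1 a2 ⊢
        constructor <;> linarith
      · have c2 := H.closure_ge hx (by linarith)
        have a2 := hstrip x hx1 (by rw [abs_le]; constructor <;> linarith)
        have a3 := barrier_abs hn h0 h1 hδ0 hδ H hx hx1
        rw [← hM] at a3
        have : M * (xn x + δ) ≤ M * δ := mul_le_mul_of_nonneg_left (by linarith) hM0
        rw [abs_le] at a2 a3 ⊢
        constructor <;> linarith
  refine ⟨h, hh0, pform_odd h1', hodd, ?_, ?_, ?_⟩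
  · intro x hx
    have a1 := hb x hx
    have a2 := abs_xn_le x
    have : K * |xn x| ≤ K * 1 := mul_le_mul_of_nonneg_left (by linarith) (by linarith)
    linarith
  · intro x hx hx1
    have := hstrip x hx hx1
    nlinarith
  · intro x hx hx1
    rw [abs_le]
    constructor
    · have := hmain (fun x => - u x) (C (-1) * h) H.neg (by rw [plap_C_mul, hh0, mul_zero])
        (fun x a b c => by
          have := (abs_le.1 (hbdry x a b c)).1
          simp [peval] at this ⊢; linarith) x hx hx1
      simp [peval] at this ⊢; linarith
    · exact hmain u h H hh0 (fun x a b c => (abs_le.1 (hbdry x a b c)).2) x hx hx1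


theorem lemC (hn : 2 ≤ n) (k : ℕ) : ∃ A K : ℝ, 1 ≤ A ∧ 0 ≤ K ∧
    ∀ (α δ s N : ℝ), 0 < α → α < 1 → 0 < δ → δ ≤ 1 → 0 < s → s ≤ 1 / 2 → 1 ≤ N →
    A * δ ≤ s ^ ((k : ℝ) + α) →
    ∀ (Ω : Set (En n)) (u : En n → ℝ), Hyp α δ Ω u →
    (∀ x ∈ Ω ∩ ball (0 : En n) 1, |u x| ≤ N * ‖x‖ ^ ((k : ℝ) + α)) →
    ∃ q : MvPolynomial (Fin n) ℝ, q.IsHomogeneous (k + 1) ∧ plap q = 0 ∧ PForm q ∧ pnorm q ≤ K ∧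
      ∀ x ∈ Ω, ‖x‖ ≤ (3 / 4) / 2 ^ (k + 2) →
        |u x - peval q x| ≤ A * δ + K * N * s ^ α + K * ‖x‖ ^ (k + 2) := by
  obtain ⟨A, hA, hap⟩ := approx hn
  choose Cp hCp0 hCp using fun m => pnorm_hc_bound (n := n) m
  obtain ⟨Ct, hCt0, hCt⟩ := taylor_bound (n := n) (k + 2)
  set K1 := Cp (k + 1) * A / (3 / 4) ^ (k + 1) with hK1
  set K2 := ∑ j ∈ Finset.range (k + 1), Cp j * 2 with hK2
  set K3 := Ct * A / (3 / 4) ^ (k + 2) with hK3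
  have hK10 : 0 ≤ K1 := by have := hCp0 (k + 1); positivity
  have hK20 : 0 ≤ K2 := Finset.sum_nonneg fun j _ => mul_nonneg (hCp0 j) (by norm_num)
  have hK30 : 0 ≤ K3 := by positivity
  refine ⟨A, K1 + K2 + K3, hA, by positivity, ?_⟩
  intro α δ s N h0 h1 hδ0 hδ hs0 hs hN hAδ Ω u H hu
  obtain ⟨h, hh0, hhf, hodd, hhb, hstrip, huh⟩ := hap α δ h0 h1 hδ0 hδ Ω u H
  set B := s ^ ((k : ℝ) + α) with hB
  have hB0 : 0 < B := Real.rpow_pos_of_pos hs0 _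
  have hpos : ∀ x : En n, ‖x‖ ≤ s → 0 ≤ xn x → |peval h x| ≤ 2 * N * B := by
    intro x hx hx0
    by_cases hxδ : xn x ≤ δ
    · have := hstrip x (by linarith) (by rwa [abs_of_nonneg hx0])
      nlinarith
    · push Not at hxδ
      have hO := H.up x (by linarith) hxδ
      have a1 := hu x ⟨hO, by simp; linarith⟩
      have a2 := huh x hO (by linarith)
      have a3 : ‖x‖ ^ ((k : ℝ) + α) ≤ B := Real.rpow_le_rpow (norm_nonneg _) hx (by positivity)
      have a4 : N * ‖x‖ ^ ((k : ℝ) + α) ≤ N * B := mul_le_mul_of_nonneg_left a3 (by linarith)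
      have a5 : B ≤ N * B := le_mul_of_one_le_left hB0.le hN
      rw [abs_le] at a1 a2 ⊢
      constructor <;> linarith
  have hhs : ∀ x : En n, ‖x‖ ≤ s → |peval h x| ≤ 2 * N * B := by
    intro x hx
    rcases le_total 0 (xn x) with c | c
    · exact hpos x hx c
    · have := hpos (rf x) (by rwa [norm_rf]) (by rw [xn_rf]; linarith)
      rwa [hodd, abs_neg] at this
  refine ⟨homogeneousComponent (k + 1) h, homogeneousComponent_isHomogeneous _ _,
    plap_hc _ h hh0, hhf.hc _, ?_, ?_⟩
  · have := hCp (k + 1) (3 / 4) A h (by norm_num) (by linarith) hh0 hhb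
    linarith
  · intro x hx hx1
    have hx34 : ‖x‖ < 3 / 4 := by
      refine hx1.trans_lt (div_lt_self (by norm_num) ?_)
      exact one_lt_pow₀ (by norm_num) (by omega)
    have a1 := huh x hx hx34
    have a2 := hCt (3 / 4) A h (by norm_num) (by linarith) hh0 hhb x hx1
    have e : peval (h - ptrunc (k + 2) h) x = peval h x - peval (ptrunc (k + 1) h) x
        - peval (homogeneousComponent (k + 1) h) x := by
      have : ptrunc (k + 2) h = ptrunc (k + 1) h + homogeneousComponent (k + 1) h := by
        simp only [ptrunc]; rw [Finset.sum_range_succ]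
      rw [this]; simp only [peval, map_sub, map_add]; ring
    rw [e] at a2
    have a3 : |peval (ptrunc (k + 1) h) x| ≤ K2 * N * s ^ α := by
      have e2 : peval (ptrunc (k + 1) h) x =
          ∑ j ∈ Finset.range (k + 1), peval (homogeneousComponent j h) x := by
        simp only [ptrunc, peval, map_sum]
      rw [e2, hK2, Finset.sum_mul, Finset.sum_mul]
      refine (Finset.abs_sum_le_sum_abs _ _).trans (Finset.sum_le_sum fun j hj => ?_)
      have hj' : j ≤ k := by have := Finset.mem_range.1 hj; omega
      have b1 := abs_peval_le (homogeneousComponent_isHomogeneous j h) x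
      have b2 := hCp j s (2 * N * B) h hs0 (by positivity) hh0 hhs
      have b3 : ‖x‖ ^ j ≤ 1 := pow_le_one₀ (norm_nonneg _) (by linarith)
      have b4 : B / s ^ j ≤ s ^ α := by
        rw [div_le_iff₀ (by positivity), hB, ← Real.rpow_natCast s j, ← Real.rpow_add hs0]
        apply Real.rpow_le_rpow_of_exponent_ge hs0 (by linarith)
        have : (j:ℝ) ≤ k := by exact_mod_cast hj'
        linarith
      calc _ ≤ pnorm (homogeneousComponent j h) * ‖x‖ ^ j := b1
        _ ≤ pnorm (homogeneousComponent j h) := mul_le_of_le_one_right (pnorm_nonneg _) b3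
        _ ≤ Cp j * (2 * N * B) / s ^ j := b2
        _ = Cp j * 2 * N * (B / s ^ j) := by ring
        _ ≤ Cp j * 2 * N * s ^ α := by
          apply mul_le_mul_of_nonneg_left b4
          have := hCp0 j; positivity
    rw [← hK3] at a2
    have hsα : 0 ≤ N * s ^ α := by positivity
    have hxk : 0 ≤ ‖x‖ ^ (k + 2) := by positivity
    have c1 : K2 * N * s ^ α ≤ (K1 + K2 + K3) * N * s ^ α := by nlinarith
    have c2 : K3 * ‖x‖ ^ (k + 2) ≤ (K1 + K2 + K3) * ‖x‖ ^ (k + 2) := by nlinarith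
    rw [abs_le] at a1 a2 a3 ⊢
    constructor <;> linarith


theorem exists_small {a b K ε : ℝ} (ha : 0 < a) (hb : 0 < b) (hK : 0 ≤ K) (hε : 0 < ε) :
    ∃ s : ℝ, 0 < s ∧ s ≤ b ∧ K * s ^ a ≤ ε := by
  have hpos : 0 < ε / (K + 1) := by positivity
  refine ⟨min b ((ε / (K + 1)) ^ (1 / a)), lt_min hb (Real.rpow_pos_of_pos hpos _),
    min_le_left _ _, ?_⟩
  have h1 : (min b ((ε / (K + 1)) ^ (1 / a))) ^ a ≤ ε / (K + 1) := by
    calc _ ≤ ((ε / (K + 1)) ^ (1 / a)) ^ a :=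
          Real.rpow_le_rpow (le_min hb.le (Real.rpow_nonneg hpos.le _)) (min_le_right _ _) ha.le
      _ = ε / (K + 1) := by
          rw [← Real.rpow_mul hpos.le, one_div, inv_mul_cancel₀ ha.ne', Real.rpow_one]
  calc _ ≤ K * (ε / (K + 1)) := mul_le_mul_of_nonneg_left h1 hK
    _ ≤ (K + 1) * (ε / (K + 1)) := by nlinarith
    _ = ε := by field_simp

theorem xpn_le (x : En n) : xpn x ≤ ‖x‖ := by
  rw [EuclideanSpace.norm_eq, xpn]
  apply Real.sqrt_le_sqrt
  refine (Finset.sum_le_sum_of_subset_of_nonneg (Finset.erase_subset _ _)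
    fun i _ _ => sq_nonneg _).trans ?_
  simp

theorem xpn_nonneg (x : En n) : 0 ≤ xpn x := Real.sqrt_nonneg _

theorem xpn_rpow_le {α R : ℝ} (h0 : 0 < α) (hR0 : 0 ≤ R) (hR : R ≤ 1) {x : En n} (hx : ‖x‖ ≤ R) :
    xpn x ^ ((1:ℝ) + α) ≤ R := by
  calc xpn x ^ ((1:ℝ) + α) ≤ R ^ ((1:ℝ) + α) :=
        Real.rpow_le_rpow (xpn_nonneg x) ((xpn_le x).trans hx) (by linarith)
    _ ≤ R ^ (1:ℝ) := Real.rpow_le_rpow_of_exponent_ge' hR0 hR (by norm_num) (by linarith)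
    _ = R := Real.rpow_one R

theorem xn_smul (R : ℝ) (x : En n) : xn (R • x) = R * xn x := by simp [xn]

theorem scale_hyp {α δ δ' N R : ℝ} (h0 : 0 < α) (h1 : α < 1) {k : ℕ} (hk : 1 ≤ k)
    (hδ : 0 < δ) (hδ' : δ ≤ δ') (hN : 1 ≤ N) (hN' : 2 / N ≤ δ') (hR0 : 0 < R) (hR1 : R ≤ 1)
    {Ω : Set (En n)} {u : En n → ℝ} (ho : IsOpen Ω) (hz : (0 : En n) ∉ Ω)
    (hD : Domain1α α δ Ω) (hc : ContinuousOn u (closure Ω ∩ ball 0 1))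
    (hL : ∀ x ∈ Ω ∩ ball (0 : En n) 1, ∃ L, |L| ≤ 2 * ‖x‖ ^ ((k : ℝ) - 2 + α) ∧ Lap2 u x L)
    (hu : ∀ x ∈ Ω ∩ ball (0 : En n) 1, |u x| ≤ N * ‖x‖ ^ ((k : ℝ) + α))
    (hg : ∀ x ∈ frontier Ω ∩ ball (0 : En n) 1, |u x| ≤ δ * ‖x‖ ^ ((k : ℝ) + α)) :
    Hyp α δ' {y : En n | R • y ∈ Ω} (fun y => (N * R ^ ((k : ℝ) + α))⁻¹ * u (R • y)) ∧
    ∀ y ∈ {y : En n | R • y ∈ Ω} ∩ ball (0 : En n) 1,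
      |(N * R ^ ((k : ℝ) + α))⁻¹ * u (R • y)| ≤ 1 * ‖y‖ ^ ((k : ℝ) + α) := by
  have hδ'0 : 0 ≤ δ' := by linarith
  have hcont : Continuous (fun y : En n => R • y) := continuous_const_smul R
  have hnorm : ∀ y : En n, ‖R • y‖ = R * ‖y‖ := fun y => by
    rw [norm_smul, Real.norm_eq_abs, abs_of_pos hR0]
  have hball : ∀ y : En n, ‖y‖ < 1 → ‖R • y‖ < 1 := fun y hy => by
    rw [hnorm]; nlinarith [norm_nonneg y]
  have hRk : 0 < R ^ ((k : ℝ) + α) := Real.rpow_pos_of_pos hR0 _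
  have hNR : 0 < N * R ^ ((k : ℝ) + α) := by positivity
  have hmul : ∀ y : En n, ‖R • y‖ ^ ((k : ℝ) + α) = R ^ ((k : ℝ) + α) * ‖y‖ ^ ((k : ℝ) + α) :=
    fun y => by rw [hnorm, Real.mul_rpow hR0.le (norm_nonneg _)]
  have hfront : frontier {y : En n | R • y ∈ Ω} = {y | R • y ∈ frontier Ω} :=
    ((Homeomorph.smulOfNeZero R hR0.ne').preimage_frontier Ω).symm
  have hclos : closure {y : En n | R • y ∈ Ω} = {y | R • y ∈ closure Ω} :=
    ((Homeomorph.smulOfNeZero R hR0.ne').preimage_closure Ω).symm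
  have hdec : ∀ y ∈ {y : En n | R • y ∈ Ω} ∩ ball (0 : En n) 1,
      |(N * R ^ ((k : ℝ) + α))⁻¹ * u (R • y)| ≤ 1 * ‖y‖ ^ ((k : ℝ) + α) := by
    rintro y ⟨hy, hy1⟩
    have hy1' : ‖y‖ < 1 := by simpa using hy1
    have := hu (R • y) ⟨hy, by simpa using hball y hy1'⟩
    rw [hmul] at this
    rw [abs_mul, abs_inv, abs_of_pos hNR, inv_mul_le_iff₀ hNR]
    linarith
  have hxp : ∀ y : En n, ‖y‖ < 1 → xpn (R • y) ^ ((1:ℝ) + α) ≤ R := fun y hy =>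
    xpn_rpow_le h0 hR0.le hR1 (by rw [hnorm]; nlinarith)
  refine ⟨⟨ho.preimage hcont, by simpa using hz, ?_, ?_, ?_, ?_, ?_, ?_⟩, hdec⟩
  · intro y hy hy2
    apply hD.1 (R • y) (hball y hy)
    rw [xn_smul]
    have := hxp y hy
    have h3 : δ * xpn (R • y) ^ ((1:ℝ) + α) ≤ δ * R := mul_le_mul_of_nonneg_left this hδ.le
    nlinarith
  · intro y hy hy2
    apply hD.2 (R • y) (hball y hy)
    rw [xn_smul]
    have := hxp y hy
    have h3 : δ * xpn (R • y) ^ ((1:ℝ) + α) ≤ δ * R := mul_le_mul_of_nonneg_left this hδ.le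
    nlinarith
  · rw [hclos]
    refine ContinuousOn.mul continuousOn_const (hc.comp hcont.continuousOn ?_)
    rintro y ⟨hy1, hy2⟩
    exact ⟨hy1, by simpa using hball y (by simpa using hy2)⟩
  · rintro y ⟨hy, hy1⟩
    have hy1' : ‖y‖ < 1 := by simpa using hy1
    have hy0 : 0 < ‖y‖ := by
      rw [norm_pos_iff]; rintro rfl
      apply hz; simpa using hy
    obtain ⟨L, hL1, hL2⟩ := hL (R • y) ⟨hy, by simpa using hball y hy1'⟩
    refine ⟨_, ?_, (hL2.scale R).const_mul _⟩
    rw [hnorm, Real.mul_rpow hR0.le (norm_nonneg _)] at hL1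
    have e1 : R ^ 2 * R ^ ((k : ℝ) - 2 + α) = R ^ ((k : ℝ) + α) := by
      rw [← Real.rpow_natCast R 2, ← Real.rpow_add hR0]; congr 1; push_cast; ring
    have e2 : ‖y‖ ^ ((k : ℝ) - 2 + α) ≤ ‖y‖ ^ (α - 1) := by
      apply Real.rpow_le_rpow_of_exponent_ge hy0 hy1'.le
      have : (1:ℝ) ≤ k := by exact_mod_cast hk
      linarith
    rw [abs_mul, abs_inv, abs_of_pos hNR, abs_mul, abs_of_nonneg (sq_nonneg R)]
    calc (N * R ^ ((k : ℝ) + α))⁻¹ * (R ^ 2 * |L|)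
        ≤ (N * R ^ ((k : ℝ) + α))⁻¹ * (R ^ 2 * (2 * (R ^ ((k : ℝ) - 2 + α) *
            ‖y‖ ^ ((k : ℝ) - 2 + α)))) := by gcongr
      _ = (N * R ^ ((k : ℝ) + α))⁻¹ * (2 * (R ^ 2 * R ^ ((k : ℝ) - 2 + α)) *
            ‖y‖ ^ ((k : ℝ) - 2 + α)) := by ring
      _ = (2 / N) * ‖y‖ ^ ((k : ℝ) - 2 + α) := by rw [e1]; field_simp
      _ ≤ δ' * ‖y‖ ^ (α - 1) := by gcongr
  · intro y hy
    refine (hdec y hy).trans ?_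
    rw [one_mul]
    have : ‖y‖ < 1 := by simpa using hy.2
    exact Real.rpow_le_one (norm_nonneg _) this.le (by positivity)
  · rw [hfront]
    rintro y ⟨hy, hy1⟩
    have hy1' : ‖y‖ < 1 := by simpa using hy1
    have := hg (R • y) ⟨hy, by simpa using hball y hy1'⟩
    rw [hmul] at this
    rw [abs_mul, abs_inv, abs_of_pos hNR, inv_mul_le_iff₀ hNR]
    have h2 : ‖y‖ ^ ((k : ℝ) + α) ≤ 1 := Real.rpow_le_one (norm_nonneg _) hy1'.le (by positivity)
    calc |u (R • y)| ≤ δ * (R ^ ((k : ℝ) + α) * ‖y‖ ^ ((k : ℝ) + α)) := this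
      _ ≤ δ' * (R ^ ((k : ℝ) + α) * 1) := by gcongr
      _ = 1 * R ^ ((k : ℝ) + α) * δ' := by ring
      _ ≤ N * R ^ ((k : ℝ) + α) * δ' := by gcongr

theorem decay (hn : 2 ≤ n) {k : ℕ} (hk : 1 ≤ k) {α : ℝ} (h0 : 0 < α) (h1 : α < 1) :
    ∃ δ1 Ns : ℝ, 0 < δ1 ∧ 1 ≤ Ns ∧ ∀ (δ Ku : ℝ) (Ω : Set (En n)) (u : En n → ℝ),
    0 < δ → δ ≤ δ1 → IsOpen Ω → (0 : En n) ∉ Ω →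
    Domain1α α δ Ω → ContinuousOn u (closure Ω ∩ ball 0 1) →
    (∀ x ∈ Ω ∩ ball (0 : En n) 1, ∃ L, |L| ≤ 2 * ‖x‖ ^ ((k : ℝ) - 2 + α) ∧ Lap2 u x L) →
    (∀ x ∈ Ω ∩ ball (0 : En n) 1, |u x| ≤ Ku * ‖x‖ ^ ((k : ℝ) + α)) →
    (∀ x ∈ Ω ∩ ball (0 : En n) 1, |u x| ≤ 1) →
    (∀ x ∈ frontier Ω ∩ ball (0 : En n) 1, |u x| ≤ δ * ‖x‖ ^ ((k : ℝ) + α)) →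
    ∀ x ∈ Ω ∩ ball (0 : En n) 1, |u x| ≤ Ns * ‖x‖ ^ ((k : ℝ) + α) := by
  obtain ⟨A, K, hA, hK, hC⟩ := lemC hn k
  obtain ⟨ρ, hρ0, hρ1, hρ⟩ := exists_small (a := 1 - α) (b := (3 / 4) / 2 ^ (k + 2)) (K := 2 * K)
    (ε := 1 / 8) (by linarith) (by positivity) (by positivity) (by norm_num)
  have hρk : 0 < ρ ^ ((k : ℝ) + α) := Real.rpow_pos_of_pos hρ0 _
  obtain ⟨s, hs0, hs1, hs⟩ := exists_small (a := α) (b := 1 / 2) (K := K)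
    (ε := ρ ^ ((k : ℝ) + α) / 8) h0 (by norm_num) hK (by positivity)
  have hsk : 0 < s ^ ((k : ℝ) + α) := Real.rpow_pos_of_pos hs0 _
  have hρlt : ρ < 1 := by
    refine hρ1.trans_lt ((div_le_self (by norm_num) (one_le_pow₀ (by norm_num))).trans_lt ?_)
    norm_num
  obtain ⟨δ', hδ'0, hδ'1, hδ'2⟩ : ∃ δ' : ℝ, 0 < δ' ∧ δ' ≤ 1 ∧
      A * δ' ≤ min (s ^ ((k : ℝ) + α)) (ρ ^ ((k : ℝ) + α) / 8) := by
    obtain ⟨d, hd0, hd1, hd2⟩ := exists_small (a := 1) (b := 1) (K := A)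
      (ε := min (s ^ ((k : ℝ) + α)) (ρ ^ ((k : ℝ) + α) / 8)) one_pos one_pos (by linarith)
      (lt_min hsk (by positivity))
    exact ⟨d, hd0, hd1, by simpa using hd2⟩
  have hδs : A * δ' ≤ s ^ ((k : ℝ) + α) := hδ'2.trans (min_le_left _ _)
  have hδρ : A * δ' ≤ ρ ^ ((k : ℝ) + α) / 8 := hδ'2.trans (min_le_right _ _)
  set Ns := max 1 (max (2 / δ') (2 / ρ ^ ((k : ℝ) + α))) with hNs
  refine ⟨δ', Ns, hδ'0, le_max_left _ _, ?_⟩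
  intro δ Ku Ω u hδ0 hδ ho hz hD hc hL hKu hu1 hg
  have hxpos : ∀ x ∈ Ω, 0 < ‖x‖ ^ ((k : ℝ) + α) := fun x hx => by
    apply Real.rpow_pos_of_pos
    rw [norm_pos_iff]; rintro rfl; exact hz hx
  by_contra hcon
  push Not at hcon
  obtain ⟨x1, hx1, hx1'⟩ := hcon
  set S := (fun x => |u x| / ‖x‖ ^ ((k : ℝ) + α)) '' (Ω ∩ ball (0 : En n) 1) with hS
  have hbdd : BddAbove S := by
    refine ⟨Ku, ?_⟩
    rintro _ ⟨x, hx, rfl⟩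
    have := hKu x hx
    simpa only [div_le_iff₀ (hxpos x hx.1)] using this
  set N := sSup S with hN
  have hmem : ∀ x ∈ Ω ∩ ball (0 : En n) 1, |u x| ≤ N * ‖x‖ ^ ((k : ℝ) + α) := by
    intro x hx
    rw [← div_le_iff₀ (hxpos x hx.1)]
    exact le_csSup hbdd ⟨x, hx, rfl⟩
  have hNN : Ns < N := by
    have := hx1'.trans_le (hmem x1 hx1)
    exact lt_of_mul_lt_mul_right this (hxpos x1 hx1.1).le
  have hN1 : 1 ≤ N := (le_max_left _ _).trans hNN.le
  have hN2 : 2 / δ' ≤ N := (le_max_left _ _).trans ((le_max_right _ _).trans hNN.le)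
  have hN3 : 2 / ρ ^ ((k : ℝ) + α) ≤ N :=
    (le_max_right _ _).trans ((le_max_right _ _).trans hNN.le)
  obtain ⟨_, ⟨x0, hx0, rfl⟩, hx0'⟩ := exists_lt_of_lt_csSup (s := S) ⟨_, ⟨x1, hx1, rfl⟩⟩
    (show N / 2 < sSup S by rw [← hN]; linarith)
  simp only [lt_div_iff₀ (hxpos x0 hx0.1)] at hx0'
  have hx0n : 0 < ‖x0‖ := by
    rw [norm_pos_iff]; rintro rfl; exact hz hx0.1
  by_cases hcase : ρ ≤ ‖x0‖
  · have a1 : ρ ^ ((k : ℝ) + α) ≤ ‖x0‖ ^ ((k : ℝ) + α) :=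
      Real.rpow_le_rpow hρ0.le hcase (by positivity)
    have a2 := hu1 x0 hx0
    rw [div_le_iff₀ hρk] at hN3
    have : N * ρ ^ ((k : ℝ) + α) ≤ N * ‖x0‖ ^ ((k : ℝ) + α) := by gcongr
    linarith
  · push Not at hcase
    set R := ‖x0‖ / ρ with hR
    have hR0 : 0 < R := by positivity
    have hR1 : R ≤ 1 := by rw [hR, div_le_one hρ0]; exact hcase.le
    obtain ⟨H, Hd⟩ := scale_hyp h0 h1 hk hδ0 hδ hN1
      (by rw [div_le_iff₀ (by linarith)]; rw [div_le_iff₀ hδ'0] at hN2; linarith)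
      hR0 hR1 ho hz hD hc hL hmem hg
    obtain ⟨q, hq1, hq2, hq3, hq4, hq5⟩ := hC α δ' s 1 h0 h1 hδ'0 hδ'1 hs0 hs1 le_rfl hδs _ _ H Hd
    have hy : R • (R⁻¹ • x0) = x0 := smul_inv_smul₀ hR0.ne' x0
    have hyn : ‖R⁻¹ • x0‖ = ρ := by
      rw [norm_smul, norm_inv, Real.norm_eq_abs, abs_of_pos hR0, hR]
      field_simp
    have b1 := hq5 (R⁻¹ • x0) (by simpa only [mem_ofPred_eq, hy] using hx0.1) (by rw [hyn]; exact hρ1)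
    rw [hy, hyn] at b1
    have b2 := abs_peval_le hq1 (R⁻¹ • x0)
    rw [hyn] at b2
    have e1 : ρ ^ (k + 1) = ρ ^ ((k : ℝ) + α) * ρ ^ (1 - α) := by
      rw [← Real.rpow_add hρ0, ← Real.rpow_natCast ρ (k + 1)]; congr 1; push_cast; ring
    have b3 : pnorm q * ρ ^ (k + 1) ≤ K * ρ ^ (k + 1) := by gcongr
    have b4 : ρ ^ (k + 2) ≤ ρ ^ (k + 1) := pow_le_pow_of_le_one hρ0.le hρlt.le (by omega)
    have b5 : K * ρ ^ (k + 2) ≤ K * ρ ^ (k + 1) := by gcongr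
    have b6 : 2 * K * ρ ^ (k + 1) ≤ ρ ^ ((k : ℝ) + α) * (1 / 8) := by
      rw [e1]
      calc 2 * K * (ρ ^ ((k : ℝ) + α) * ρ ^ (1 - α))
          = ρ ^ ((k : ℝ) + α) * (2 * K * ρ ^ (1 - α)) := by ring
        _ ≤ _ := by gcongr
    have b7 : |(N * R ^ ((k : ℝ) + α))⁻¹ * u x0| ≤ ρ ^ ((k : ℝ) + α) / 2 := by
      rw [mul_one] at b1
      rw [abs_le] at b1 b2 ⊢
      constructor <;> linarith
    have hNR : 0 < N * R ^ ((k : ℝ) + α) := by positivity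
    rw [abs_mul, abs_inv, abs_of_pos hNR, inv_mul_le_iff₀ hNR] at b7
    have e2 : R ^ ((k : ℝ) + α) * ρ ^ ((k : ℝ) + α) = ‖x0‖ ^ ((k : ℝ) + α) := by
      rw [← Real.mul_rpow hR0.le hρ0.le, hR, div_mul_cancel₀ _ hρ0.ne']
    have : N * R ^ ((k : ℝ) + α) * (ρ ^ ((k : ℝ) + α) / 2) = N / 2 * ‖x0‖ ^ ((k : ℝ) + α) := by
      rw [← e2]; ring
    linarith


theorem frontier_xn_le {δ : ℝ} (hδ : 0 < δ) {Ω : Set (En n)} (ho : IsOpen Ω) (hz : (0 : En n) ∉ Ω)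
    (up : ∀ x : En n, ‖x‖ < 1 → xn x > δ → x ∈ Ω)
    (dn : ∀ x : En n, ‖x‖ < 1 → xn x < -δ → x ∉ Ω) {x : En n}
    (hx : x ∈ frontier Ω) (h1 : ‖x‖ < 1) : |xn x| ≤ δ := by
  have H : Hyp (1 / 2) δ Ω (fun _ => (0:ℝ)) := by
    refine ⟨ho, hz, up, dn, continuousOn_const, fun x _ => ⟨0, ?_, ?_⟩, ?_, ?_⟩
    · rw [abs_zero]; positivity
    · have := lap2_peval (0 : MvPolynomial (Fin n) ℝ) x
      have e : (peval (0 : MvPolynomial (Fin n) ℝ)) = fun _ => (0:ℝ) := by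
        funext y; simp [peval]
      have e2 : plap (0 : MvPolynomial (Fin n) ℝ) = 0 := by simp [plap]
      rw [e2, e] at this
      exact this
    · intro x _; simp
    · intro x _; simpa using hδ.le
  exact H.frontier_le hx h1

end Helpers

/-- Lemma 2.3: the key approximation step for the Dirichlet problem: `u` is
approximated at scale `η` by a `(k+1)`-form `Q` with `ΔQ + P ≡ 0`. -/
theorem stmt_9 (n : ℕ) [NeZero n] (hn : 2 ≤ n) (k : ℕ) (hk : 1 ≤ k) :
    ∃ C₀ : ℝ, 0 < C₀ ∧
      ∀ α : ℝ, 0 < α → α < 1 →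
        ∃ η δ : ℝ, 0 < η ∧ η < 1 ∧ 0 < δ ∧
          ∀ (Ω : Set (En n)) (u f g : En n → ℝ) (P : MvPolynomial (Fin n) ℝ) (Ku : ℝ),
            IsOpen Ω → IsConnected Ω → IsBounded Ω → (0 : En n) ∈ frontier Ω →
            -- `P` is a homogeneous polynomial of degree `k-1` with `‖P‖ ≤ 1`
            P.IsHomogeneous (k - 1) → pnorm P ≤ 1 →
            -- `u` solves `Δu + P = f` in `Ω∩B₁`, `u = g` on `∂Ω∩B₁`
            ContinuousOn u (closure Ω ∩ ball 0 1) →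
            (∀ x ∈ Ω ∩ ball (0 : En n) 1,
              DifferentiableAt ℝ u x ∧ DifferentiableAt ℝ (fderiv ℝ u) x ∧
              lapAt u x + peval P x = f x) →
            (∀ x ∈ frontier Ω ∩ ball (0 : En n) 1, u x = g x) →
            -- `u ∈ C^{k,α}(0)` with `u(0) = |Du(0)| = ⋯ = |D^k u(0)| = 0`
            (∀ x ∈ Ω ∩ ball (0 : En n) 1, |u x| ≤ Ku * ‖x‖ ^ ((k : ℝ) + α)) →
            -- `‖u‖_{L^∞(Ω∩B₁)} ≤ 1`
            (∀ x ∈ Ω ∩ ball (0 : En n) 1, |u x| ≤ 1) →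
            -- smallness of data
            (∀ x ∈ Ω ∩ ball (0 : En n) 1, |f x| ≤ δ * ‖x‖ ^ ((k : ℝ) - 2 + α)) →
            (∀ x ∈ frontier Ω ∩ ball (0 : En n) 1, |g x| ≤ δ * ‖x‖ ^ ((k : ℝ) + α)) →
            Domain1α α δ Ω →
            -- conclusion
            ∃ Q : MvPolynomial (Fin n) ℝ, Q.IsHomogeneous (k + 1) ∧ substLast 0 Q = 0 ∧
              (∀ x ∈ Ω ∩ ball (0 : En n) η, |u x - peval Q x| ≤ η ^ ((k : ℝ) + 1 + α)) ∧
              pnorm Q ≤ C₀ ∧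
              plap Q + P = 0 := by
  obtain ⟨A, K, hA, hK, hC⟩ := lemC hn k
  obtain ⟨KP, hKP0, hKP⟩ := poly_solve (n := n) (k - 1)
  have hk2 : k - 1 + 2 = k + 1 := by omega
  rw [hk2] at hKP
  have hk1 : (1:ℝ) ≤ k := by exact_mod_cast hk
  refine ⟨(1 + KP) * K + KP + 1, by positivity, ?_⟩
  intro α h0 h1
  obtain ⟨δ1, Ns, hδ1, hNs, hdec⟩ := decay hn hk h0 h1
  obtain ⟨η, hη0, hη1, hη⟩ := exists_small (a := 1 - α) (b := (3 / 4) / 2 ^ (k + 2))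
    (K := (1 + KP) * K) (ε := 1 / 3) (by linarith) (by positivity) (by positivity) (by norm_num)
  have hηlt : η < 1 := by
    refine hη1.trans_lt ((div_le_self (by norm_num) (one_le_pow₀ (by norm_num))).trans_lt ?_)
    norm_num
  set E := η ^ ((k : ℝ) + 1 + α) with hE
  have hE0 : 0 < E := Real.rpow_pos_of_pos hη0 _
  set N := Ns + KP with hN
  have hN1 : 1 ≤ N := by linarith
  obtain ⟨s, hs0, hs1, hs⟩ := exists_small (a := α) (b := 1 / 2) (K := (1 + KP) * (K * N))
    (ε := E / 3) h0 (by norm_num) (by positivity) (by positivity)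
  have hsk : 0 < s ^ ((k : ℝ) + α) := Real.rpow_pos_of_pos hs0 _
  obtain ⟨δ, hδ0, hδb, hδ⟩ := exists_small (a := 1) (b := min 1 δ1) (K := (1 + KP) * A)
    (ε := min (s ^ ((k : ℝ) + α)) (E / 3)) one_pos (lt_min one_pos hδ1) (by positivity)
    (lt_min hsk (by positivity))
  rw [Real.rpow_one] at hδ
  have hδs := hδ.trans (min_le_left _ _)
  have hδE := hδ.trans (min_le_right _ _)
  have hδ1' : δ ≤ 1 := hδb.trans (min_le_left _ _)
  have hAδ : A * δ ≤ s ^ ((k : ℝ) + α) := by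
    have : 0 ≤ KP * (A * δ) := by positivity
    linarith
  refine ⟨η, δ, hη0, hηlt, hδ0, ?_⟩
  intro Ω u f g P Ku ho _ _ h0f hPh hP1 hcu hlap hug hKu hu1 hf hg hD
  have hz : (0 : En n) ∉ Ω := by
    have := h0f.2
    rwa [ho.interior_eq] at this
  have hnb : ∀ {x : En n}, x ∈ ball (0 : En n) 1 → ‖x‖ < 1 := fun hx => by simpa using hx
  have hxpos : ∀ x ∈ Ω, 0 < ‖x‖ := fun x hx => by
    rw [norm_pos_iff]; rintro rfl; exact hz hx
  have hL : ∀ x ∈ Ω ∩ ball (0 : En n) 1, Lap2 u x (f x - peval P x) := by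
    intro x hx
    have := lap2_of_lapAt (ho.inter isOpen_ball) hx (fun y hy => (hlap y hy).1) (hlap x hx).2.1
    have e : f x - peval P x = lapAt u x := by rw [← (hlap x hx).2.2]; ring
    rwa [e]
  have hPle : ∀ x ∈ Ω ∩ ball (0 : En n) 1, |peval P x| ≤ ‖x‖ ^ ((k : ℝ) - 2 + α) := by
    intro x hx
    have a1 := abs_peval_le hPh x
    have a2 : pnorm P * ‖x‖ ^ (k - 1) ≤ 1 * ‖x‖ ^ (k - 1) := by gcongr
    have a3 : ‖x‖ ^ (k - 1) ≤ ‖x‖ ^ ((k : ℝ) - 2 + α) := by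
      rw [← Real.rpow_natCast ‖x‖ (k - 1)]
      apply Real.rpow_le_rpow_of_exponent_ge (hxpos x hx.1) (hnb hx.2).le
      rw [Nat.cast_sub hk]; push_cast; linarith
    linarith
  have hgu : ∀ x ∈ frontier Ω ∩ ball (0 : En n) 1, |u x| ≤ δ * ‖x‖ ^ ((k : ℝ) + α) := by
    intro x hx
    rw [hug x hx]; exact hg x hx
  have hdecu := hdec δ Ku Ω u hδ0 (hδb.trans (min_le_right _ _)) ho hz hD hcu (by
    intro x hx
    refine ⟨_, ?_, hL x hx⟩
    have a1 := hf x hx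
    have a2 := hPle x hx
    have a4 : 0 ≤ ‖x‖ ^ ((k : ℝ) - 2 + α) := by positivity
    have a3 : δ * ‖x‖ ^ ((k : ℝ) - 2 + α) ≤ 1 * ‖x‖ ^ ((k : ℝ) - 2 + α) := by gcongr
    rw [abs_le] at a1 a2 ⊢
    constructor <;> linarith) hKu hu1 hgu
  have hup : ∀ x : En n, ‖x‖ < 1 → xn x > δ → x ∈ Ω := by
    intro x hx hx2
    apply hD.1 x hx
    have := xpn_rpow_le h0 zero_le_one le_rfl hx.le
    nlinarith
  have hdn : ∀ x : En n, ‖x‖ < 1 → xn x < -δ → x ∉ Ω := by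
    intro x hx hx2
    apply hD.2 x hx
    have := xpn_rpow_le h0 zero_le_one le_rfl hx.le
    nlinarith
  obtain ⟨QP, hQ1, hQ2, hQ3, hQ4⟩ := hKP P hPh hP1
  have hc0 : 0 < 1 + KP := by linarith
  have hlapQ : ∀ x, peval (plap QP) x = - peval P x := by
    intro x
    have : plap QP = -P := eq_neg_of_add_eq_zero_left hQ3
    rw [this]; simp [peval]
  have hQk : ∀ x : En n, |peval QP x| ≤ KP * ‖x‖ ^ (k + 1) := by
    intro x
    have := abs_peval_le hQ1 x
    have a2 : pnorm QP * ‖x‖ ^ (k + 1) ≤ KP * ‖x‖ ^ (k + 1) := by gcongr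
    linarith
  have hdw : ∀ x ∈ Ω ∩ ball (0 : En n) 1,
      |(1 + KP)⁻¹ * (u x - peval QP x)| ≤ N * ‖x‖ ^ ((k : ℝ) + α) := by
    intro x hx
    have a1 := hdecu x hx
    have a2 := hQk x
    have a3 : ‖x‖ ^ (k + 1) ≤ ‖x‖ ^ ((k : ℝ) + α) := by
      rw [← Real.rpow_natCast ‖x‖ (k + 1)]
      apply Real.rpow_le_rpow_of_exponent_ge (hxpos x hx.1) (hnb hx.2).le
      push_cast; linarith
    have a4 : KP * ‖x‖ ^ (k + 1) ≤ KP * ‖x‖ ^ ((k : ℝ) + α) := by gcongr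
    have a5 : |u x - peval QP x| ≤ N * ‖x‖ ^ ((k : ℝ) + α) := by
      rw [hN, add_mul]
      rw [abs_le] at a1 a2 ⊢
      constructor <;> linarith
    rw [abs_mul, abs_inv, abs_of_pos hc0]
    refine le_trans (mul_le_of_le_one_left (abs_nonneg _) ?_) a5
    exact inv_le_one_of_one_le₀ (by linarith)
  have H : Hyp α δ Ω (fun x => (1 + KP)⁻¹ * (u x - peval QP x)) := by
    refine ⟨ho, hz, hup, hdn,
      continuousOn_const.mul (hcu.sub (continuous_peval _).continuousOn), ?_, ?_, ?_⟩
    · intro x hx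
      refine ⟨_, ?_, ((hL x hx).sub (lap2_peval QP x)).const_mul _⟩
      rw [hlapQ, abs_mul, abs_inv, abs_of_pos hc0]
      have e : f x - peval P x - -peval P x = f x := by ring
      rw [e]
      refine le_trans (mul_le_of_le_one_left (abs_nonneg _)
        (inv_le_one_of_one_le₀ (by linarith))) ((hf x hx).trans ?_)
      refine mul_le_mul_of_nonneg_left ?_ hδ0.le
      apply Real.rpow_le_rpow_of_exponent_ge (hxpos x hx.1) (hnb hx.2).le
      linarith
    · intro x hx
      rw [abs_mul, abs_inv, abs_of_pos hc0, inv_mul_le_iff₀ hc0]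
      have a1 := hu1 x hx
      have a2 := hQk x
      have a3 : KP * ‖x‖ ^ (k + 1) ≤ KP * 1 :=
        mul_le_mul_of_nonneg_left (pow_le_one₀ (norm_nonneg _) (hnb hx.2).le) hKP0
      rw [abs_le] at a1 a2 ⊢
      constructor <;> linarith
    · intro x hx
      rw [abs_mul, abs_inv, abs_of_pos hc0, inv_mul_le_iff₀ hc0]
      have a0 := frontier_xn_le hδ0 ho hz hup hdn hx.1 (hnb hx.2)
      have a1 := hgu x hx
      have a2 := abs_peval_form_le hQ2 x (hnb hx.2).le
      have a3 : pnorm QP * |xn x| ≤ KP * δ := by gcongr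
      have a4 : ‖x‖ ^ ((k : ℝ) + α) ≤ 1 :=
        Real.rpow_le_one (norm_nonneg _) (hnb hx.2).le (by positivity)
      have a5 : δ * ‖x‖ ^ ((k : ℝ) + α) ≤ δ * 1 := by gcongr
      rw [abs_le] at a1 a2 ⊢
      constructor <;> linarith
  obtain ⟨q, hq1, hq2, hq3, hq4, hq5⟩ := hC α δ s N h0 h1 hδ0 hδ1' hs0 hs1 hN1 hAδ Ω _ H hdw
  refine ⟨C (1 + KP) * q + QP, ?_, ?_, ?_, ?_, ?_⟩
  · refine IsHomogeneous.add ?_ hQ1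
    simpa using (isHomogeneous_C (Fin n) (1 + KP)).mul hq1
  · exact (pform_iff _).1 ((hq3.C_mul _).add hQ2)
  · intro x hx
    have hxη : ‖x‖ < η := by simpa using hx.2
    have a1 := hq5 x hx.1 (by linarith)
    have e : u x - peval (C (1 + KP) * q + QP) x
        = (1 + KP) * ((1 + KP)⁻¹ * (u x - peval QP x) - peval q x) := by
      simp only [peval, map_add, map_mul, eval_C]
      field_simp
      ring
    rw [e, abs_mul, abs_of_pos hc0]
    have a2 : ‖x‖ ^ (k + 2) ≤ η ^ (k + 2) := by gcongr
    have e1 : η ^ (k + 2) = E * η ^ (1 - α) := by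
      rw [hE, ← Real.rpow_add hη0, ← Real.rpow_natCast η (k + 2)]; congr 1; push_cast; ring
    have a3 : (1 + KP) * (K * ‖x‖ ^ (k + 2)) ≤ E / 3 := by
      calc (1 + KP) * (K * ‖x‖ ^ (k + 2)) ≤ (1 + KP) * (K * η ^ (k + 2)) := by gcongr
        _ = E * ((1 + KP) * K * η ^ (1 - α)) := by rw [e1]; ring
        _ ≤ E * (1 / 3) := by gcongr
        _ = E / 3 := by ring
    calc _ ≤ (1 + KP) * (A * δ + K * N * s ^ α + K * ‖x‖ ^ (k + 2)) := by gcongr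
      _ = (1 + KP) * A * δ + (1 + KP) * (K * N) * s ^ α + (1 + KP) * (K * ‖x‖ ^ (k + 2)) := by ring
      _ ≤ E := by linarith
  · refine (pnorm_add_le _ _).trans ?_
    rw [pnorm_C_mul, abs_of_pos hc0]
    have : (1 + KP) * pnorm q ≤ (1 + KP) * K := by gcongr
    linarith
  · rw [plap_add, plap_C_mul, hq2, mul_zero, zero_add, hQ3]
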